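/- Let n ≥ 3 and let A, B ⊆ ℝⁿ be Borel sets with dimH A > 2 and dimH B > 2. Then the set of unit vectors e ∈ S^{n−1} for which the set π_e(A) ∩ π_e(B) ⊆ ℝ has non-empty interior has positive (n−1)-dimensional Hausdorff measure in S^{n−1}. -/

import Mathlib

open MeasureTheory Metric Set
open scoped ENNReal RealInnerProductSpace

/-!
Frostman's lemma gives probability measures `μ` and `ν` on compact subsets of `A` and `B` which
satisfy a Frostman condition with exponents greater than two. For a standard Gaussian direction
`w`, the mean over `w` of `‖charFun μ (r • w)‖ ^ 2` is a Gaussian mean of the law of the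
difference of two independent samples of `μ`, and decays like `|r| ^ (-s)` with `s > 2`. Hence for
almost every `w` the characteristic function of the projection of `μ` to the line along `w` is
integrable, that is, the projection has a continuous density; the same holds for `ν`. By Parseval,
the overlap integral of the two densities is, up to a constant,
`∫ r, charFun μ (r • w) * conj (charFun ν (r • w))`, whose mean over `w` is
`∫ r, ∫ z, exp (-(r * ‖z‖) ^ 2 / 2) ∂(μ ∗ ν⁻) > 0`, where `ν⁻` is the reflection of `ν`. So for a
set of `w` of positive measure both densities are positive at a common point, hence on an
interval, and the projections of `A` and `B` contain this interval. This set of `w` is a cone, and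
a cone of positive volume meets the unit sphere in a set of positive measure.
-/

open Filter Topology
open scoped NNReal

section ENNRealSums

variable {α : Type*} {a : α → ℝ≥0∞}

lemma tsum_le_of_support_subsingleton {b : ℝ≥0∞} (ha : a.support.Subsingleton)
    (hb : ∀ j, a j ≤ b) : ∑' j, a j ≤ b := by
  rcases ha.eq_empty_or_singleton with h | ⟨j, h⟩
  · simp [Function.support_eq_empty_iff.1 h]
  · rw [tsum_eq_single j fun l hl => Function.notMem_support.1 (h ▸ hl)]
    exact hb j

lemma exists_le_tsum_eq {t : ℝ≥0∞} (ht : t ≤ ∑' j, a j) (ha : ∑' j, a j ≠ ∞) :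
    ∃ b ≤ a, ∑' j, b j = t := by
  refine ⟨fun j => t / (∑' j, a j) * a j,
    fun j => mul_le_of_le_one_left' (ENNReal.div_le_of_le_mul (by rwa [one_mul])), ?_⟩
  rw [ENNReal.tsum_mul_left]
  rcases eq_or_ne (∑' j, a j) 0 with h0 | h0
  · rw [h0, mul_zero]
    exact (le_zero_iff.1 (h0 ▸ ht)).symm
  · exact ENNReal.div_mul_cancel h0 ha

end ENNRealSums

section CappedOuterMeasure

variable {X κ : Type*}

/-- The outer measure `S ↦ min c (∑ j, m (S ∩ s j))`. -/
noncomputable def cappedSumRestrict (c : ℝ≥0∞) (m : OuterMeasure X) (s : κ → Set X) :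
    OuterMeasure X where
  measureOf S := min c (∑' j, m (S ∩ s j))
  empty := by simp
  mono h := by gcongr
  iUnion_nat S _ := by
    by_cases hS : ∃ n, c ≤ ∑' j, m (S n ∩ s j)
    · obtain ⟨n, hn⟩ := hS
      refine le_trans ?_ (ENNReal.le_tsum n)
      rw [min_eq_left hn]
      exact min_le_left _ _
    · push Not at hS
      refine (min_le_right _ _).trans ?_
      simp_rw [fun n => min_eq_right (hS n).le]
      rw [ENNReal.tsum_comm]
      refine ENNReal.tsum_le_tsum fun j => ?_
      rw [iUnion_inter]
      exact measure_iUnion_le _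

end CappedOuterMeasure

/-- A sequence of partitions of `X`, each refining the previous one: `index k x` labels the cell of
level `k` that contains `x`, and `parent` sends the label of a cell to the label of the cell of the
previous level that contains it. -/
structure NestedPartition (X ι : Type*) where
  index : ℕ → X → ι
  parent : ι → ι
  parent_index : ∀ k x, parent (index (k + 1) x) = index k x

namespace NestedPartition

variable {X ι : Type*} (N : NestedPartition X ι)

/-- The cell of level `k` with label `i`. -/
def cell (k : ℕ) (i : ι) : Set X := N.index k ⁻¹' {i}

/-- The labels of the cells into which a cell with label `i` is subdivided. -/
def children (i : ι) : Set ι := N.parent ⁻¹' {i}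

/-- The Hausdorff-type content obtained by covering with cells, a cell of level `k` costing
`w k`. -/
noncomputable def content (w : ℕ → ℝ≥0∞) : OuterMeasure X :=
  OuterMeasure.boundedBy fun S => ⨅ (k : ℕ) (i : ι) (_ : S ⊆ N.cell k i), w k

variable {N} {w : ℕ → ℝ≥0∞}

lemma content_le {S : Set X} {k : ℕ} {i : ι} (h : S ⊆ N.cell k i) : N.content w S ≤ w k :=
  (OuterMeasure.boundedBy_le S).trans (iInf_le_of_le k (iInf_le_of_le i (iInf_le _ h)))

lemma le_content {m : OuterMeasure X} (h : ∀ S k i, S ⊆ N.cell k i → m S ≤ w k) :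
    m ≤ N.content w :=
  OuterMeasure.le_boundedBy.2 fun S =>
    le_iInf fun k => le_iInf fun i => le_iInf fun hS => h S k i hS

variable (N) in
lemma iterate_parent_index (k d : ℕ) (x : X) : N.parent^[d] (N.index (k + d) x) = N.index k x := by
  induction d with
  | zero => rfl
  | succ d ih => rw [Function.iterate_succ_apply, ← Nat.add_assoc, N.parent_index, ih]

lemma cell_subset_cell_iterate_parent (k d : ℕ) (i : ι) :
    N.cell (k + d) i ⊆ N.cell k (N.parent^[d] i) := by
  rintro x rfl
  exact (N.iterate_parent_index k d x).symm

lemma disjoint_cell {k : ℕ} {i j : ι} (h : i ≠ j) : Disjoint (N.cell k i) (N.cell k j) :=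
  (disjoint_singleton.2 h).preimage _

lemma subset_iUnion_children {S : Set X} {k : ℕ} {i : ι} (h : S ⊆ N.cell k i) :
    S ⊆ ⋃ j : N.children i, S ∩ N.cell (k + 1) j := fun x hx =>
  mem_iUnion.2 ⟨⟨N.index (k + 1) x, (N.parent_index k x).trans (h hx)⟩, hx, rfl⟩

lemma cell_succ_subset_cell {k : ℕ} {i : ι} (j : N.children i) :
    N.cell (k + 1) j ⊆ N.cell k i := by
  rintro x hx
  exact (N.parent_index k x).symm.trans ((congrArg N.parent hx).trans j.2)

lemma min_tsum_children_le_content (hw : Antitone w) (S : Set X) (k : ℕ) (i : ι) :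
    min (w k) (∑' j : N.children i, N.content w (S ∩ N.cell (k + 1) j)) ≤ N.content w S := by
  refine le_content (m := cappedSumRestrict (w k) (N.content w)
    fun j : N.children i => N.cell (k + 1) j) (fun S k' i' hS => ?_) S
  change min _ (∑' j : N.children i, N.content w (S ∩ N.cell (k + 1) j)) ≤ _
  rcases le_or_gt k' k with hk | hk
  · exact (min_le_left _ _).trans (hw hk)
  obtain ⟨d, rfl⟩ := Nat.exists_eq_add_of_le (Nat.succ_le_of_lt hk)
  refine (min_le_right _ _).trans (tsum_le_of_support_subsingleton ?_ fun j =>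
    content_le (inter_subset_left.trans hS))
  have eq_ancestor : ∀ j : N.children i, N.content w (S ∩ N.cell (k + 1) j) ≠ 0 →
      j.1 = N.parent^[d] i' := fun j hj => by
    by_contra hne
    refine hj (measure_mono_null (t := ∅) ?_ measure_empty)
    rw [← (disjoint_cell hne).inter_eq, inter_comm]
    exact inter_subset_inter_right _ (hS.trans (cell_subset_cell_iterate_parent (k + 1) d i'))
  exact fun j hj j' hj' => Subtype.ext ((eq_ancestor j hj).trans (eq_ancestor j' hj').symm)

lemma content_eq_zero_of_forall_inter_cell_le {θ : ℝ≥0∞} (hθ0 : θ ≠ 0) (hθ : θ < 1) {F : Set X}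
    (hF : N.content w F ≠ ∞) (h : ∀ k i, N.content w (F ∩ N.cell k i) ≤ θ * w k) :
    N.content w F = 0 := by
  have hθt : θ ≠ ∞ := (hθ.trans ENNReal.one_lt_top).ne
  have hle : OuterMeasure.restrict F (N.content w) ≤ θ • N.content w := by
    rw [content, OuterMeasure.smul_boundedBy hθt]
    refine OuterMeasure.le_boundedBy.2 fun S => ?_
    rw [Pi.smul_apply, smul_eq_mul]
    simp_rw [ENNReal.mul_iInf_of_ne hθ0 hθt]
    refine le_iInf fun k => le_iInf fun i => le_iInf fun hS => ?_
    rw [OuterMeasure.restrict_apply, inter_comm]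
    exact (measure_mono (inter_subset_inter_right F hS)).trans (h k i)
  by_contra h0
  refine (ENNReal.mul_lt_mul_left h0 hF hθ).not_ge ?_
  simpa using hle F

section IncreasingSets

open scoped Classical in
variable (N w) in
/-- The total weight of the cells `d` levels below the cell `(k, i)` which belong to `T` while none
of their ancestors from `(k, i)` on does. -/
noncomputable def firstHitWeight (T : Set (ℕ × ι)) : ℕ → ℕ → ι → ℝ≥0∞
  | 0, k, i => if (k, i) ∈ T then w k else 0
  | d + 1, k, i =>
      if (k, i) ∈ T then 0 else ∑' j : N.children i, firstHitWeight T d (k + 1) j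

lemma content_firstHit_le [Countable ι] (T : Set (ℕ × ι)) (d k : ℕ) (i : ι) :
    N.content w {x | N.index k x = i ∧ (k + d, N.index (k + d) x) ∈ T ∧
      ∀ l < d, (k + l, N.index (k + l) x) ∉ T} ≤ N.firstHitWeight w T d k i := by
  induction d generalizing k i with
  | zero =>
    by_cases h : (k, i) ∈ T
    · rw [firstHitWeight, if_pos h]
      exact content_le (i := i) fun x hx => hx.1
    · rw [firstHitWeight, if_neg h]
      refine (measure_mono_null (t := ∅) ?_ measure_empty).le
      rintro x ⟨rfl, hx, -⟩
      exact h hx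
  | succ d ih =>
    by_cases h : (k, i) ∈ T
    · rw [firstHitWeight, if_pos h]
      refine (measure_mono_null (t := ∅) ?_ measure_empty).le
      rintro x ⟨rfl, -, hx⟩
      exact hx 0 d.succ_pos h
    · rw [firstHitWeight, if_neg h]
      refine le_trans ?_ (ENNReal.tsum_le_tsum fun j => ih (k + 1) j)
      refine le_trans (measure_mono ?_) (measure_iUnion_le _)
      rintro x ⟨rfl, hx, hx'⟩
      refine mem_iUnion.2 ⟨⟨N.index (k + 1) x, N.parent_index k x⟩, rfl, ?_, fun l hl => ?_⟩
      · rwa [Nat.add_right_comm]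
      · rw [Nat.add_right_comm]
        exact hx' (l + 1) (by lia)

lemma mul_sum_firstHitWeight_le {θ : ℝ≥0∞} {T : Set (ℕ × ι)} {m : ℕ → ι → ℝ≥0∞}
    (hT : ∀ k i, (k, i) ∈ T → θ * w k ≤ m k i)
    (hm : ∀ k i, (k, i) ∉ T → ∑' j : N.children i, m (k + 1) j ≤ m k i) (d k : ℕ) (i : ι) :
    θ * ∑ l ∈ Finset.range d, N.firstHitWeight w T l k i ≤ m k i := by
  induction d generalizing k i with
  | zero => simp
  | succ d ih =>
    rw [Finset.sum_range_succ']
    by_cases h : (k, i) ∈ T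
    · simpa [firstHitWeight, h] using hT k i h
    · simp only [firstHitWeight, h, if_false, add_zero]
      rw [← Summable.tsum_finsetSum fun _ _ => ENNReal.summable, ← ENNReal.tsum_mul_left]
      exact (ENNReal.tsum_le_tsum fun j : N.children i => ih (k + 1) j).trans (hm k i h)

variable (N w) in
/-- The supremum along `E` of the contents of the parts lying in the cell `(k, i)`. -/
noncomputable def supContent (E : ℕ → Set X) (k : ℕ) (i : ι) : ℝ≥0∞ :=
  ⨆ n, N.content w (E n ∩ N.cell k i)

lemma tsum_children_supContent_le (hw : Antitone w) {E : ℕ → Set X} (hE : Monotone E) {k : ℕ}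
    {i : ι} (hlt : N.supContent w E k i < w k) :
    ∑' j : N.children i, N.supContent w E (k + 1) j ≤ N.supContent w E k i := by
  simp only [supContent]
  rw [ENNReal.tsum_eq_iSup_sum]
  refine iSup_le fun F => ?_
  rw [ENNReal.finsetSum_iSup_of_monotone
    (f := fun (j : N.children i) n => N.content w (E n ∩ N.cell (k + 1) j)) fun j n n' hn =>
    measure_mono (inter_subset_inter_left _ (hE hn))]
  refine iSup_mono fun n => (ENNReal.sum_le_tsum F).trans ?_
  have not_optimal : N.content w (E n ∩ N.cell k i) < w k :=
    (le_iSup (fun n => N.content w (E n ∩ N.cell k i)) n).trans_lt hlt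
  refine le_trans (ENNReal.tsum_le_tsum fun j => measure_mono ?_)
    ((min_le_iff.1 (min_tsum_children_le_content hw (E n ∩ N.cell k i) k i)).resolve_left
      not_optimal.not_ge)
  exact fun x hx => ⟨⟨hx.1, cell_succ_subset_cell j hx.2⟩, hx.2⟩

lemma content_unhit_eq_zero {θ : ℝ≥0∞} (hθ0 : θ ≠ 0) (hθ : θ < 1) (E : ℕ → Set X) (n : ℕ)
    (hn : N.content w (E n) ≠ ∞) :
    N.content w {x ∈ E n | ∀ k, N.supContent w E k (N.index k x) < θ * w k} = 0 := by
  refine content_eq_zero_of_forall_inter_cell_le hθ0 hθ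
    ((measure_mono (sep_subset _ _)).trans_lt hn.lt_top).ne fun k j => ?_
  rcases eq_empty_or_nonempty
    ({x ∈ E n | ∀ k, N.supContent w E k (N.index k x) < θ * w k} ∩ N.cell k j) with h | h
  · simp [h]
  · obtain ⟨x, ⟨-, hx⟩, rfl⟩ := h
    refine le_trans ?_ (hx k).le
    refine (measure_mono ?_).trans (le_iSup (fun n => N.content w (E n ∩ _)) n)
    exact inter_subset_inter_left _ fun y hy => hy.1

/-- Stop each descending sequence of cells at the first one in which the sets `E n` eventually fill
a proportion `θ`: the stopped cells cover `⋃ n, E n` economically, up to a null set. -/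
lemma mul_content_iUnion_le [Countable ι] (hw : Antitone w) (hw0 : w 0 ≠ ∞) {E : ℕ → Set X}
    (hE : Monotone E) {i : ι} (hi : ∀ n, E n ⊆ N.cell 0 i) {θ : ℝ≥0∞} (hθ0 : θ ≠ 0) (hθ : θ < 1) :
    θ * N.content w (⋃ n, E n) ≤ ⨆ n, N.content w (E n) := by
  set T : Set (ℕ × ι) := {c | θ * w c.1 ≤ N.supContent w E c.1 c.2}
  have hfin : ∀ n, N.content w (E n) ≠ ∞ := fun n => ((content_le (hi n)).trans_lt hw0.lt_top).ne
  have hcover : (⋃ n, E n) ⊆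
      (⋃ n, {x ∈ E n | ∀ k, N.supContent w E k (N.index k x) < θ * w k}) ∪
      ⋃ d, {x | N.index 0 x = i ∧ (0 + d, N.index (0 + d) x) ∈ T ∧
        ∀ l < d, (0 + l, N.index (0 + l) x) ∉ T} := by
    intro x hx
    obtain ⟨n, hn⟩ := mem_iUnion.1 hx
    by_cases h : ∃ k, (k, N.index k x) ∈ T
    · classical
      refine Or.inr (mem_iUnion.2 ⟨Nat.find h, hi n hn, ?_, fun l hl => ?_⟩)
      · simpa using Nat.find_spec h
      · simpa using Nat.find_min h hl
    · exact Or.inl (mem_iUnion.2 ⟨n, hn, fun k => not_le.1 fun hk => h ⟨k, hk⟩⟩)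
  have hchild : ∀ k j, (k, j) ∉ T →
      ∑' l : N.children j, N.supContent w E (k + 1) l ≤ N.supContent w E k j := fun k j hkj =>
    tsum_children_supContent_le hw hE
      ((not_le.1 hkj).trans_le (mul_le_of_le_one_left' hθ.le))
  calc θ * N.content w (⋃ n, E n)
      ≤ θ * (0 + ∑' d, N.firstHitWeight w T d 0 i) := by
        gcongr
        refine (measure_mono hcover).trans ((measure_union_le _ _).trans (add_le_add ?_ ?_))
        · exact (measure_iUnion_null fun n => content_unhit_eq_zero hθ0 hθ E n (hfin n)).le
        · exact (measure_iUnion_le _).trans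
            (ENNReal.tsum_le_tsum fun d => content_firstHit_le T d 0 i)
    _ ≤ N.supContent w E 0 i := by
        rw [zero_add, ENNReal.tsum_eq_iSup_nat, ENNReal.mul_iSup]
        exact iSup_le fun d => mul_sum_firstHitWeight_le (fun k j h => h) hchild d 0 i
    _ ≤ ⨆ n, N.content w (E n) := iSup_mono fun n => measure_mono inter_subset_left

lemma content_iUnion_le_iSup [Countable ι] (hw : Antitone w) (hw0 : w 0 ≠ ∞) {E : ℕ → Set X}
    (hE : Monotone E) {i : ι} (hi : ∀ n, E n ⊆ N.cell 0 i) :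
    N.content w (⋃ n, E n) ≤ ⨆ n, N.content w (E n) := by
  refine ENNReal.le_of_forall_lt_one_mul_le fun θ hθ => ?_
  rcases eq_or_ne θ 0 with rfl | hθ0
  · simp
  · exact mul_content_iUnion_le hw hw0 hE hi hθ0 hθ

end IncreasingSets

section MassDistribution

variable [MeasurableSpace X]

lemma sum_children_cell_le {k l : ℕ} {i j : ι} (hj : MeasurableSet (N.cell (k + 1 + l) j))
    {μ : N.children i → Measure X} (hμ : ∀ c : N.children i, μ c (N.cell (k + 1) c)ᶜ = 0)
    {b : ℝ≥0∞} (hb : ∀ c, μ c (N.cell (k + 1 + l) j) ≤ b) :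
    Measure.sum μ (N.cell (k + 1 + l) j) ≤ b := by
  rw [Measure.sum_apply _ hj]
  refine tsum_le_of_support_subsingleton ?_ hb
  have eq_ancestor : ∀ c : N.children i, μ c (N.cell (k + 1 + l) j) ≠ 0 →
      c.1 = N.parent^[l] j := fun c hc => by
    by_contra hne
    refine hc (measure_mono_null ?_ (hμ c))
    exact (cell_subset_cell_iterate_parent (k + 1) l j).trans
      (disjoint_cell (Ne.symm hne)).subset_compl_right
  exact fun c hc c' hc' => Subtype.ext ((eq_ancestor c hc).trans (eq_ancestor c' hc').symm)

/-- The mass `t` is distributed down the tree of cells, proportionally to the contents of the parts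
of `E`. -/
lemma exists_measure_cell_le_weight [MeasurableSingletonClass X]
    (hcell : ∀ k i, MeasurableSet (N.cell k i)) (hchild : ∀ i, (N.children i).Finite)
    (hwt : ∀ k, w k ≠ ∞) (d k : ℕ) (i : ι) {E : Set X} (hE : E ⊆ N.cell k i) {t : ℝ≥0∞}
    (ht : t ≤ N.content w E) :
    ∃ μ : Measure X, μ Eᶜ = 0 ∧ μ univ = t ∧ ∀ l ≤ d, ∀ j, μ (N.cell (k + l) j) ≤ w (k + l) := by
  have htw : t ≤ w k := ht.trans (content_le hE)
  induction d generalizing k i E t with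
  | zero =>
    rcases E.eq_empty_or_nonempty with rfl | ⟨x, hx⟩
    · have : t = 0 := by simpa using ht
      exact ⟨0, by simp [this]⟩
    · refine ⟨t • Measure.dirac x, by simp [hx], by simp, fun l hl j => ?_⟩
      obtain rfl : l = 0 := Nat.le_zero.1 hl
      exact (measure_mono (subset_univ _)).trans (by simpa using htw)
  | succ d ih =>
    have := (hchild i).fintype
    obtain ⟨τ, hτ, hτt⟩ := exists_le_tsum_eq
      (ht.trans ((measure_mono (subset_iUnion_children hE)).trans (measure_iUnion_le _)))
      (by
        rw [tsum_fintype]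
        exact ENNReal.sum_ne_top.2 fun j _ =>
          ((content_le inter_subset_right).trans_lt (hwt (k + 1)).lt_top).ne)
    choose μ hμE hμτ hμw using fun j : N.children i =>
      ih (k + 1) j.1 inter_subset_right (hτ j) ((hτ j).trans (content_le inter_subset_right))
    have hmass : Measure.sum μ univ = t := by
      rw [Measure.sum_apply _ MeasurableSet.univ]
      simp_rw [hμτ, hτt]
    refine ⟨Measure.sum μ, Measure.sum_apply_eq_zero.2 fun j =>
      measure_mono_null (compl_subset_compl.2 inter_subset_left) (hμE j), hmass, ?_⟩
    rintro (- | l) hl j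
    · exact (measure_mono (subset_univ _)).trans (hmass.trans_le htw)
    · rw [Nat.add_comm l 1, ← Nat.add_assoc]
      exact sum_children_cell_le (hcell _ _) (fun c =>
        measure_mono_null (compl_subset_compl.2 inter_subset_right) (hμE c))
        fun c => hμw c l (by lia) j

end MassDistribution

end NestedPartition

section Capacitability

lemma isCompact_setOf_forall_le (N : ℕ → ℕ) : IsCompact {x : ℕ → ℕ | ∀ i, x i ≤ N i} := by
  convert isCompact_univ_pi fun i => (finite_Iic (N i)).isCompact using 1
  ext x
  simp [Pi.le_def]

lemma exists_truncation_subset {N : ℕ → ℕ} {U : Set (ℕ → ℕ)} (hU : IsOpen U)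
    (hN : {x : ℕ → ℕ | ∀ i, x i ≤ N i} ⊆ U) :
    ∃ k, {x : ℕ → ℕ | ∀ i < k, x i ≤ N i} ⊆ U := by
  have hcyl : ∀ x ∈ {x : ℕ → ℕ | ∀ i, x i ≤ N i}, ∃ m, PiNat.cylinder x m ⊆ U := by
    intro x hx
    obtain ⟨_, ⟨y, m, rfl⟩, hxy, hsub⟩ :=
      (PiNat.isTopologicalBasis_cylinders fun _ => ℕ).exists_subset_of_mem_open (hN hx) hU
    exact ⟨m, by rwa [PiNat.mem_cylinder_iff_eq.1 hxy]⟩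
  choose! m hm using hcyl
  obtain ⟨t, ht, htc⟩ := (isCompact_setOf_forall_le N).elim_nhds_subcover
    (fun x => PiNat.cylinder x (m x))
    fun x _ => (PiNat.isOpen_cylinder _ x (m x)).mem_nhds (PiNat.self_mem_cylinder x _)
  refine ⟨t.sup m, fun x hx => ?_⟩
  obtain ⟨y, hyt, hy⟩ := mem_iUnion₂.1
    (htc (show (fun i => min (x i) (N i)) ∈ {x : ℕ → ℕ | ∀ i, x i ≤ N i} from
      fun i => min_le_right _ _))
  refine hm y (ht y hyt) fun i hi => ?_
  rw [← hy i hi]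
  exact (min_eq_left (hx i (hi.trans_le (Finset.le_sup hyt)))).symm

lemma exists_forall_lt_image_truncation {X : Type*} {f : (ℕ → ℕ) → X} {M : Set X → ℝ≥0∞}
    (hM : ∀ E : ℕ → Set X, Monotone E → (⋃ n, E n) ⊆ range f → M (⋃ n, E n) ≤ ⨆ n, M (E n))
    {c : ℝ≥0∞} (hc : c < M (range f)) :
    ∃ N : ℕ → ℕ, ∀ k, c < M (f '' {x | ∀ i < k, x i ≤ N i}) := by
  have bound_coordinate : ∀ (k : ℕ) (S : {S : Set (ℕ → ℕ) // c < M (f '' S)}),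
      ∃ m, c < M (f '' (S.1 ∩ {x | x k ≤ m})) := by
    rintro k ⟨S, hS⟩
    have hu : f '' S = ⋃ m, f '' (S ∩ {x | x k ≤ m}) := by
      rw [← image_iUnion, ← inter_iUnion]
      congr
      exact (inter_eq_left.2 fun x _ => mem_iUnion.2 ⟨x k, le_refl (x k)⟩).symm
    have := hM (fun m => f '' (S ∩ {x | x k ≤ m}))
      (fun m m' h => image_mono (inter_subset_inter_right S fun x hx => le_trans hx h))
      (by rw [← hu]; exact image_subset_range _ _)
    rw [← hu] at this
    exact lt_iSup_iff.1 (hS.trans_le this)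
  choose m hm using bound_coordinate
  let S : ℕ → {S : Set (ℕ → ℕ) // c < M (f '' S)} := fun k =>
    Nat.rec ⟨univ, by rwa [image_univ]⟩ (fun k S => ⟨S.1 ∩ {x | x k ≤ m k S}, hm k S⟩) k
  have hS : ∀ k, (S k).1 = {x | ∀ i < k, x i ≤ m i (S i)} := by
    intro k
    induction k with
    | zero => exact (eq_univ_of_forall fun x i hi => absurd hi (Nat.not_lt_zero i)).symm
    | succ k ih =>
      change (S k).1 ∩ {x | x k ≤ m k (S k)} = _
      ext x
      simp only [ih, mem_inter_iff, mem_ofPred_eq, Nat.forall_lt_succ_right]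
  exact ⟨fun k => m k (S k), fun k => hS k ▸ (S k).2⟩

/-- **Choquet's capacitability theorem**, in a form that does not require the capacity `M` to be
continuous along decreasing sequences of compact sets. -/
lemma exists_isCompact_forall_lt_of_continuous {X : Type*} [TopologicalSpace X]
    {f : (ℕ → ℕ) → X} (hf : Continuous f) {M : Set X → ℝ≥0∞}
    (hM : ∀ E : ℕ → Set X, Monotone E → (⋃ n, E n) ⊆ range f → M (⋃ n, E n) ≤ ⨆ n, M (E n))
    {c : ℝ≥0∞} (hc : c < M (range f)) :
    ∃ K ⊆ range f, IsCompact K ∧ ∃ E : ℕ → Set X, (∀ k, E k ⊆ range f) ∧ (∀ k, c < M (E k)) ∧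
      ∀ U, IsOpen U → K ⊆ U → ∀ᶠ k in atTop, E k ⊆ U := by
  obtain ⟨N, hN⟩ := exists_forall_lt_image_truncation hM hc
  refine ⟨f '' {x | ∀ i, x i ≤ N i}, image_subset_range _ _,
    (isCompact_setOf_forall_le N).image hf, fun k => f '' {x | ∀ i < k, x i ≤ N i},
    fun k => image_subset_range _ _, hN, fun U hU hKU => ?_⟩
  obtain ⟨k, hk⟩ := exists_truncation_subset (hU.preimage hf) (image_subset_iff.1 hKU)
  filter_upwards [eventually_ge_atTop k] with l hl
  exact image_subset_iff.2 fun x hx => hk fun i hi => hx i (hi.trans_le hl)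

end Capacitability

section WeakLimit

variable {X : Type*} [TopologicalSpace X] [T2Space X] [MeasurableSpace X]

lemma exists_isProbabilityMeasure_forall_isOpen_le [BorelSpace X] [HasOuterApproxClosed X]
    {H : Set X} (hH : IsCompact H) (μ : ℕ → Measure X) [∀ k, IsProbabilityMeasure (μ k)]
    (hμ : ∀ k, μ k Hᶜ = 0) :
    ∃ ν : Measure X, IsProbabilityMeasure ν ∧
      ∀ G b, IsOpen G → (∀ᶠ k in atTop, μ k G ≤ b) → ν G ≤ b := by
  let P : ℕ → ProbabilityMeasure X := fun k => ⟨μ k, inferInstance⟩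
  have hP : ∀ k, P k ∈ {Q : ProbabilityMeasure X | ∀ _ : ℕ, Q Hᶜ ≤ 0} := fun k _ =>
    ((ENNReal.toNNReal_eq_zero_iff _).2 (Or.inl (hμ k))).le
  let 𝒰 : Ultrafilter ℕ := Ultrafilter.of atTop
  obtain ⟨Q, -, hQ⟩ := (isCompact_setOfPred_probabilityMeasure_mass_eq_compl_isCompact_le
    (u := fun _ => 0) tendsto_const_nhds (fun _ => hH) (Or.inr monotone_const)).ultrafilter_le_nhds
      (𝒰.map P) (le_principal_iff.2 (mem_map.2 (univ_mem' hP)))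
  refine ⟨Q, inferInstance, fun G b hG h => ?_⟩
  refine (ProbabilityMeasure.le_liminf_measure_open_of_tendsto
    (show Tendsto P 𝒰 (𝓝 Q) from hQ) hG).trans ?_
  exact liminf_le_of_frequently_le' (h.filter_mono (Ultrafilter.of_le atTop)).frequently

lemma measure_compl_eq_zero_of_isOpen_le [SecondCountableTopology X] {K : Set X}
    (hK : IsCompact K) {μ : ℕ → Measure X} {ν : Measure X}
    (hν : ∀ G b, IsOpen G → (∀ᶠ k in atTop, μ k G ≤ b) → ν G ≤ b)
    (hμ : ∀ U, IsOpen U → K ⊆ U → ∀ᶠ k in atTop, μ k Uᶜ = 0) : ν Kᶜ = 0 := by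
  refine measure_null_of_locally_null _ fun x hx => ?_
  obtain ⟨U, V, hU, hV, hKU, hxV, hUV⟩ :=
    SeparatedNhds.of_isCompact_isCompact hK isCompact_singleton (disjoint_singleton_right.2 hx)
  refine ⟨V, mem_nhdsWithin_of_mem_nhds (hV.mem_nhds (hxV rfl)), le_zero_iff.1 (hν V 0 hV ?_)⟩
  filter_upwards [hμ U hU hKU] with k hk
  exact (measure_mono_null hUV.symm.subset_compl_right hk).le

end WeakLimit

namespace NestedPartition

variable {X ι : Type*} [TopologicalSpace X] [MeasurableSpace X] [Countable ι]
  {N : NestedPartition X ι} {w : ℕ → ℝ≥0∞}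

lemma exists_isCompact_seq_isProbabilityMeasure [MeasurableSingletonClass X]
    (hw : Antitone w) (hwt : ∀ k, w k ≠ ∞) (hcell : ∀ k i, MeasurableSet (N.cell k i))
    (hchild : ∀ i, (N.children i).Finite) {A : Set X} (hA : AnalyticSet A) {i : ι}
    (hAi : A ⊆ N.cell 0 i) (hA0 : N.content w A ≠ 0) :
    ∃ K ⊆ A, IsCompact K ∧ ∃ (C : ℝ≥0) (μ : ℕ → Measure X),
      (∀ k, IsProbabilityMeasure (μ k) ∧ μ k Aᶜ = 0) ∧
      (∀ U, IsOpen U → K ⊆ U → ∀ᶠ k in atTop, μ k Uᶜ = 0) ∧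
      ∀ l, ∀ k ≥ l, ∀ j, μ k (N.cell l j) ≤ C * w l := by
  rw [AnalyticSet] at hA
  obtain rfl | ⟨f, hf, rfl⟩ := hA
  · simp at hA0
  obtain ⟨c, hc0, hc⟩ := exists_between (pos_iff_ne_zero.2 hA0)
  obtain ⟨K, hKf, hK, E, hEf, hEc, hEU⟩ := exists_isCompact_forall_lt_of_continuous hf
    (fun E hE hEr => content_iUnion_le_iSup hw (hwt 0) hE
      fun n => (subset_iUnion E n).trans (hEr.trans hAi)) hc
  choose μ hμE hμc hμw using fun k => exists_measure_cell_le_weight hcell hchild hwt k 0 i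
    ((hEf k).trans hAi) (hEc k).le
  have normalized_null : ∀ k {S}, (E k) ⊆ S → (c⁻¹ • μ k) Sᶜ = 0 := fun k S hS => by
    rw [Measure.smul_apply, measure_mono_null (compl_subset_compl.2 hS) (hμE k), smul_zero]
  refine ⟨K, hKf, hK, c⁻¹.toNNReal, fun k => c⁻¹ • μ k,
    fun k => ⟨⟨?_⟩, normalized_null k (hEf k)⟩, fun U hU hKU => ?_, fun l k hl j => ?_⟩
  · rw [Measure.smul_apply, hμc, smul_eq_mul, ENNReal.inv_mul_cancel hc0.ne' hc.ne_top]
  · exact (hEU U hU hKU).mono fun k hk => normalized_null k hk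
  · rw [ENNReal.coe_toNNReal (ENNReal.inv_ne_top.2 hc0.ne'), Measure.smul_apply, smul_eq_mul]
    gcongr
    simpa using hμw k l hl j

variable [T2Space X] [HasOuterApproxClosed X] [SecondCountableTopology X] [BorelSpace X]

/-- **Frostman's lemma** for nested partitions. The bound is stated for finite unions of cells since
only the measure of open sets is controlled by weak limits. -/
lemma exists_isProbabilityMeasure_le_card_mul (hw : Antitone w) (hwt : ∀ k, w k ≠ ∞)
    (hcell : ∀ k i, MeasurableSet (N.cell k i)) (hchild : ∀ i, (N.children i).Finite)
    {A H : Set X} (hA : AnalyticSet A) (hH : IsCompact H) (hAH : A ⊆ H) {i : ι}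
    (hAi : A ⊆ N.cell 0 i) (hA0 : N.content w A ≠ 0) :
    ∃ K ⊆ A, IsCompact K ∧ ∃ (C : ℝ≥0) (ν : Measure X), IsProbabilityMeasure ν ∧ ν Kᶜ = 0 ∧
      ∀ (k : ℕ) (F : Finset ι) (G : Set X), IsOpen G → G ⊆ ⋃ j ∈ F, N.cell k j →
        ν G ≤ F.card * (C * w k) := by
  obtain ⟨K, hKA, hK, C, μ, hμ, hμK, hμw⟩ :=
    exists_isCompact_seq_isProbabilityMeasure hw hwt hcell hchild hA hAi hA0
  have := fun k => (hμ k).1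
  obtain ⟨ν, hν, hνG⟩ := exists_isProbabilityMeasure_forall_isOpen_le hH μ fun k =>
    measure_mono_null (compl_subset_compl.2 hAH) (hμ k).2
  refine ⟨K, hKA, hK, C, ν, hν, measure_compl_eq_zero_of_isOpen_le hK hνG hμK,
    fun k F G hG hGF => hνG G _ hG ?_⟩
  filter_upwards [eventually_ge_atTop k] with l hl
  calc μ l G ≤ ∑ j ∈ F, μ l (N.cell k j) :=
        (measure_mono hGF).trans (measure_biUnion_finset_le _ _)
    _ ≤ F.card • (C * w k) := Finset.sum_le_card_nsmul _ _ _ fun j _ => hμw k l hl j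
    _ = F.card * (C * w k) := nsmul_eq_mul _ _

end NestedPartition

section HausdorffNull

variable {X : Type*} [EMetricSpace X] [MeasurableSpace X] [BorelSpace X] {s : ℝ}

lemma hausdorffMeasure_eq_zero_of_forall_exists_cover (hs : 0 < s) {A : Set X}
    (hA : ∀ ε : ℝ≥0∞, 0 < ε → ∃ t : ℕ → Set X, A ⊆ ⋃ j, t j ∧ ∑' j, ediam (t j) ^ s < ε) :
    μH[s] A = 0 := by
  choose t htA ht using fun n : ℕ => hA (n : ℝ≥0∞)⁻¹ (ENNReal.inv_pos.2 (ENNReal.natCast_ne_top n))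
  have tendsto_diam : Tendsto (fun n : ℕ => ((n : ℝ≥0∞)⁻¹) ^ s⁻¹) atTop (𝓝 0) := by
    have := (ENNReal.continuous_rpow_const (y := s⁻¹)).tendsto 0
    rw [ENNReal.zero_rpow_of_pos (inv_pos.2 hs)] at this
    exact this.comp ENNReal.tendsto_inv_nat_nhds_zero
  refine le_zero_iff.1 ((Measure.hausdorffMeasure_le_liminf_tsum s A _ tendsto_diam t
    (Eventually.of_forall fun n j => ?_) (Eventually.of_forall htA)).trans ?_)
  · exact (ENNReal.le_rpow_inv_iff hs).2 ((ENNReal.le_tsum j).trans (ht n).le)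
  · rw [← ENNReal.tendsto_inv_nat_nhds_zero.liminf_eq]
    exact liminf_le_liminf (Eventually.of_forall fun n => (ht n).le)

lemma NestedPartition.hausdorffMeasure_eq_zero_of_content_eq_zero {ι : Type*}
    {N : NestedPartition X ι} {w : ℕ → ℝ≥0∞} (hs : 0 < s)
    (hN : ∀ k i, ediam (N.cell k i) ^ s ≤ w k) {A : Set X} (hA : N.content w A = 0) :
    μH[s] A = 0 := by
  refine hausdorffMeasure_eq_zero_of_forall_exists_cover hs fun ε hε => ?_
  rw [content, OuterMeasure.boundedBy_apply] at hA
  rw [← hA, iInf_lt_iff] at hε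
  obtain ⟨t, ht⟩ := hε
  obtain ⟨htA, ht⟩ := iInf_lt_iff.1 ht
  refine ⟨t, htA, (ENNReal.tsum_le_tsum fun j => ?_).trans_lt ht⟩
  rcases (t j).eq_empty_or_nonempty with h | h
  · simp [h, ENNReal.zero_rpow_of_pos hs]
  · refine le_trans ?_ (le_iSup _ h)
    exact le_iInf fun k => le_iInf fun i => le_iInf fun hS =>
      (ENNReal.rpow_le_rpow (ediam_mono hS) hs.le).trans (hN k i)

end HausdorffNull

section DyadicPartition

variable {ι : Type*}

lemma floor_two_mul_ediv_two (a : ℝ) : ⌊2 * a⌋ / 2 = ⌊a⌋ := by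
  have h := Int.floor_div_natCast (2 * a) 2
  rw [Nat.cast_ofNat, mul_div_cancel_left₀ a two_ne_zero] at h
  exact h.symm

variable (ι) in
/-- The partitions of `ι → ℝ` into half-open dyadic cubes of side `2⁻ᵏ`, the label of a cube being
its lower corner multiplied by `2ᵏ`. -/
noncomputable def dyadicPartition : NestedPartition (ι → ℝ) (ι → ℤ) where
  index k x i := ⌊(2 : ℝ) ^ k * x i⌋
  parent v i := v i / 2
  parent_index k x := by
    ext i
    change ⌊(2 : ℝ) ^ (k + 1) * x i⌋ / 2 = ⌊(2 : ℝ) ^ k * x i⌋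
    rw [pow_succ', mul_assoc, floor_two_mul_ediv_two]

lemma finite_children_dyadicPartition [Finite ι] (v : ι → ℤ) :
    ((dyadicPartition ι).children v).Finite := by
  classical
  have := Fintype.ofFinite ι
  refine (finite_Icc (fun i => 2 * v i) (fun i => 2 * v i + 1)).subset fun u hu => ?_
  have hv : ∀ i, u i / 2 = v i := congrFun hu
  refine ⟨fun i => ?_, fun i => ?_⟩ <;> linarith [hv i, Int.mul_ediv_add_emod (u i) 2,
    Int.emod_nonneg (u i) two_ne_zero, Int.emod_lt_of_pos (u i) two_pos]

lemma measurableSet_cell_dyadicPartition [Countable ι] (k : ℕ) (v : ι → ℤ) :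
    MeasurableSet ((dyadicPartition ι).cell k v) := by
  have : Measurable ((dyadicPartition ι).index k) :=
    measurable_pi_lambda _ fun i => Int.measurable_floor.comp (by fun_prop)
  exact this (measurableSet_singleton v)

variable [Fintype ι]

lemma ediam_cell_dyadicPartition_le (k : ℕ) (v : ι → ℤ) :
    ediam ((dyadicPartition ι).cell k v) ≤ 2⁻¹ ^ k := by
  refine ediam_le fun x hx y hy => edist_pi_le_iff.2 fun i => ?_
  have hxy : ⌊(2 : ℝ) ^ k * x i⌋ = ⌊(2 : ℝ) ^ k * y i⌋ := congrFun (hx.trans hy.symm) i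
  have h := Int.abs_sub_lt_one_of_floor_eq_floor hxy
  rw [← mul_sub, abs_mul, abs_of_pos (by positivity)] at h
  rw [edist_dist, Real.dist_eq]
  refine ENNReal.ofReal_le_of_le_toReal ?_
  rw [ENNReal.toReal_pow, ENNReal.toReal_inv, ENNReal.toReal_ofNat, inv_pow, ← one_div,
    le_div_iff₀' (by positivity)]
  exact h.le

lemma ball_subset_biUnion_cell_dyadicPartition [DecidableEq ι] (k : ℕ) (x : ι → ℝ) :
    ball x (2⁻¹ ^ k) ⊆ ⋃ v ∈ Finset.Icc ((dyadicPartition ι).index k x - 1)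
      ((dyadicPartition ι).index k x + 1), (dyadicPartition ι).cell k v := by
  intro y hy
  refine mem_biUnion (x := (dyadicPartition ι).index k y) ?_ rfl
  have key : ∀ i, |2 ^ k * y i - 2 ^ k * x i| < 1 := fun i => by
    have h : |y i - x i| < (2 ^ k)⁻¹ := by
      simpa [Real.dist_eq] using (dist_le_pi_dist y x i).trans_lt hy
    rw [← mul_sub, abs_mul, abs_of_pos (by positivity)]
    exact (lt_inv_mul_iff₀ (by positivity)).1 (by rwa [mul_one])
  refine Finset.mem_coe.2 (Finset.mem_Icc.2 ⟨fun i => ?_, fun i => ?_⟩)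
  · change ⌊(2 : ℝ) ^ k * x i⌋ - 1 ≤ ⌊(2 : ℝ) ^ k * y i⌋
    rw [Int.le_floor]
    push_cast
    linarith [Int.floor_le ((2 : ℝ) ^ k * x i), (abs_lt.1 (key i)).1]
  · change ⌊(2 : ℝ) ^ k * y i⌋ ≤ ⌊(2 : ℝ) ^ k * x i⌋ + 1
    rw [← Int.floor_add_one]
    exact Int.floor_mono (by linarith [(abs_lt.1 (key i)).2])

lemma card_Icc_sub_one_add_one [DecidableEq ι] (v : ι → ℤ) :
    (Finset.Icc (v - 1) (v + 1)).card = 3 ^ Fintype.card ι := by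
  have : ∀ i, (Finset.Icc ((v - 1) i) ((v + 1) i)).card = 3 := fun i => by
    rw [Int.card_Icc, Pi.add_apply, Pi.sub_apply, Pi.one_apply]
    lia
  rw [Pi.card_Icc, Finset.prod_congr rfl fun i _ => this i, Finset.prod_const, Finset.card_univ]

end DyadicPartition

section IsFrostman

variable {X Y : Type*} [PseudoMetricSpace X] [MeasurableSpace X] [PseudoMetricSpace Y]
  [MeasurableSpace Y] {s : ℝ}

/-- A measure satisfies a Frostman condition with exponent `s` if `μ (B(x, r)) ≲ r ^ s` uniformly
in the centre and in the radius. -/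
def IsFrostman (s : ℝ) (μ : Measure X) : Prop :=
  ∃ C : ℝ≥0, ∀ x (r : ℝ), μ (ball x r) ≤ C * ENNReal.ofReal r ^ s

lemma isFrostman_of_forall_ball_pow (hs : 0 ≤ s) {μ : Measure X} [IsProbabilityMeasure μ]
    {C : ℝ≥0} (h : ∀ x (k : ℕ), μ (ball x (2⁻¹ ^ k)) ≤ C * (2⁻¹ ^ k) ^ s) : IsFrostman s μ := by
  refine ⟨max 1 (C * 2 ^ s), fun x r => ?_⟩
  rcases le_or_gt r 0 with hr | hr
  · simp [ball_eq_empty.2 hr]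
  rw [ENNReal.coe_max, ENNReal.coe_one]
  rcases le_or_gt 1 r with hr1 | hr1
  · calc μ (ball x r) ≤ 1 := prob_le_one
      _ ≤ ENNReal.ofReal r ^ s := by
        simpa using ENNReal.rpow_le_rpow (ENNReal.one_le_ofReal.2 hr1) hs
      _ ≤ _ := le_mul_of_one_le_left' (le_max_left _ _)
  · obtain ⟨k, hk, hk'⟩ := exists_nat_pow_near_of_lt_one hr hr1.le
      (by positivity : (0 : ℝ) < 2⁻¹) (by norm_num)
    have hkr : (2⁻¹ : ℝ≥0∞) ^ k ≤ 2 * ENNReal.ofReal r := by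
      rw [← ENNReal.ofReal_ofNat 2, ← ENNReal.ofReal_inv_of_pos two_pos,
        ← ENNReal.ofReal_pow (by positivity), ← ENNReal.ofReal_mul zero_le_two]
      exact ENNReal.ofReal_le_ofReal (by rw [pow_succ] at hk; linarith)
    calc μ (ball x r) ≤ C * (2⁻¹ ^ k) ^ s := (measure_mono (ball_subset_ball hk')).trans (h x k)
      _ ≤ C * (2 * ENNReal.ofReal r) ^ s := by gcongr
      _ = ↑(C * 2 ^ s) * ENNReal.ofReal r ^ s := by
        rw [ENNReal.mul_rpow_of_nonneg _ _ hs, ← mul_assoc, ENNReal.coe_mul,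
          ENNReal.coe_rpow_of_nonneg _ hs, ENNReal.coe_ofNat]
      _ ≤ _ := by gcongr; exact le_max_right _ _

lemma IsFrostman.map_antilipschitzWith (hs : 0 ≤ s) {μ : Measure X} (hμ : IsFrostman s μ)
    [OpensMeasurableSpace Y] {f : X → Y} (hf : Measurable f) {L : ℝ≥0}
    (hL : AntilipschitzWith L f) : IsFrostman s (μ.map f) := by
  obtain ⟨C, hC⟩ := hμ
  refine ⟨C * ((L + 1) * 2) ^ s, fun y r => ?_⟩
  rw [Measure.map_apply hf measurableSet_ball]
  rcases (f ⁻¹' ball y r).eq_empty_or_nonempty with h | ⟨x₀, hx₀⟩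
  · simp [h]
  have hsub : f ⁻¹' ball y r ⊆ ball x₀ ((L + 1) * 2 * r) := fun x hx => by
    have hdist : dist (f x) (f x₀) < 2 * r := by
      linarith [dist_triangle_right (f x) (f x₀) y, mem_ball.1 hx, mem_ball.1 hx₀]
    calc dist x x₀ ≤ L * dist (f x) (f x₀) := hL.le_mul_dist x x₀
      _ ≤ (L + 1) * dist (f x) (f x₀) := by gcongr; linarith
      _ < (L + 1) * (2 * r) := by gcongr
      _ = (L + 1) * 2 * r := by ring
  refine (measure_mono hsub).trans ((hC _ _).trans_eq ?_)
  rw [ENNReal.ofReal_mul (by positivity), ENNReal.mul_rpow_of_nonneg _ _ hs, ENNReal.coe_mul,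
    ENNReal.coe_rpow_of_nonneg _ hs, mul_assoc]
  congr
  rw [ENNReal.ofReal, ENNReal.coe_inj]
  ext
  rw [Real.coe_toNNReal _ (by positivity)]
  rfl

lemma IsFrostman.conv {E : Type*} [NormedAddCommGroup E] [MeasurableSpace E] [BorelSpace E]
    [SecondCountableTopology E] {μ : Measure E} [SFinite μ] (hμ : IsFrostman s μ) (ν : Measure E)
    [IsProbabilityMeasure ν] : IsFrostman s (μ ∗ ν) := by
  obtain ⟨C, hC⟩ := hμ
  refine ⟨C, fun x r => ?_⟩
  rw [Measure.conv, Measure.map_apply measurable_add measurableSet_ball,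
    Measure.prod_apply_symm (measurable_add measurableSet_ball)]
  calc ∫⁻ y, μ ((fun z => (z, y)) ⁻¹' ((fun p : E × E => p.1 + p.2) ⁻¹' ball x r)) ∂ν
      = ∫⁻ y, μ (ball (x - y) r) ∂ν := by
        refine lintegral_congr fun y => congrArg μ ?_
        ext z
        simp [dist_eq_norm, sub_sub_eq_add_sub, add_sub_assoc]
    _ ≤ ∫⁻ _, C * ENNReal.ofReal r ^ s ∂ν := lintegral_mono fun y => hC _ _
    _ = C * ENNReal.ofReal r ^ s := by simp

end IsFrostman

section FrostmanLemma

variable {s : ℝ}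

lemma exists_isFrostman_of_subset_cell {ι : Type*} [Fintype ι] (hs : 0 < s) {A : Set (ι → ℝ)}
    (hA : AnalyticSet A) (hA0 : μH[s] A ≠ 0) {v : ι → ℤ} (hAv : A ⊆ (dyadicPartition ι).cell 0 v) :
    ∃ K ⊆ A, IsCompact K ∧ ∃ μ : Measure (ι → ℝ),
      IsProbabilityMeasure μ ∧ μ Kᶜ = 0 ∧ IsFrostman s μ := by
  classical
  have hAb : Bornology.IsBounded A := isBounded_iff_ediam_ne_top.2
    (((ediam_mono hAv).trans (ediam_cell_dyadicPartition_le 0 v)).trans_lt (by simp)).ne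
  let w : ℕ → ℝ≥0∞ := fun k => (2⁻¹ ^ k) ^ s
  have hw : Antitone w := fun _ _ h =>
    ENNReal.rpow_le_rpow (pow_le_pow_right_of_le_one' (by simp) h) hs.le
  have hwt : ∀ k, w k ≠ ∞ := fun k =>
    ENNReal.rpow_ne_top_of_nonneg hs.le (ENNReal.pow_ne_top (by simp))
  have hdiam : ∀ k v, ediam ((dyadicPartition ι).cell k v) ^ s ≤ w k := fun k v =>
    ENNReal.rpow_le_rpow (ediam_cell_dyadicPartition_le k v) hs.le
  have hA0' : (dyadicPartition ι).content w A ≠ 0 :=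
    mt (NestedPartition.hausdorffMeasure_eq_zero_of_content_eq_zero hs hdiam) hA0
  obtain ⟨K, hKA, hK, C, μ, hμ, hμK, hμC⟩ := NestedPartition.exists_isProbabilityMeasure_le_card_mul
    hw hwt measurableSet_cell_dyadicPartition finite_children_dyadicPartition hA
    hAb.isCompact_closure subset_closure hAv hA0'
  refine ⟨K, hKA, hK, μ, hμ, hμK,
    isFrostman_of_forall_ball_pow (C := 3 ^ Fintype.card ι * C) hs.le fun x k => ?_⟩
  refine (hμC k _ _ isOpen_ball (ball_subset_biUnion_cell_dyadicPartition k x)).trans_eq ?_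
  simp [card_Icc_sub_one_add_one, w, mul_assoc]

lemma exists_isFrostman_pi {ι : Type*} [Fintype ι] (hs : 0 < s) {A : Set (ι → ℝ)}
    (hA : AnalyticSet A) (hA0 : μH[s] A ≠ 0) :
    ∃ K ⊆ A, IsCompact K ∧ ∃ μ : Measure (ι → ℝ),
      IsProbabilityMeasure μ ∧ μ Kᶜ = 0 ∧ IsFrostman s μ := by
  obtain ⟨v, hv⟩ : ∃ v, μH[s] (A ∩ (dyadicPartition ι).cell 0 v) ≠ 0 := by
    by_contra! h
    refine hA0 (measure_mono_null (fun x hx => ?_) (measure_iUnion_null h))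
    exact mem_iUnion.2 ⟨(dyadicPartition ι).index 0 x, hx, rfl⟩
  have hAv : AnalyticSet (A ∩ (dyadicPartition ι).cell 0 v) := by
    rw [inter_eq_iInter]
    exact AnalyticSet.iInter (Bool.rec (measurableSet_cell_dyadicPartition 0 v).analyticSet hA)
  obtain ⟨K, hK, h⟩ := exists_isFrostman_of_subset_cell hs hAv hv inter_subset_right
  exact ⟨K, hK.trans inter_subset_left, h⟩

variable {E : Type*} [NormedAddCommGroup E] [NormedSpace ℝ E] [FiniteDimensional ℝ E]
  [MeasurableSpace E] [BorelSpace E]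

lemma exists_isFrostman_of_hausdorffMeasure_ne_zero (hs : 0 < s) {A : Set E} (hA : AnalyticSet A)
    (hA0 : μH[s] A ≠ 0) :
    ∃ K ⊆ A, IsCompact K ∧ ∃ μ : Measure E,
      IsProbabilityMeasure μ ∧ μ Kᶜ = 0 ∧ IsFrostman s μ := by
  let e : E ≃L[ℝ] (Fin (Module.finrank ℝ E) → ℝ) := ContinuousLinearEquiv.ofFinrankEq (by simp)
  have hmeas : Measurable e.symm := e.symm.continuous.measurable
  have hA0' : μH[s] (e '' A) ≠ 0 := fun h => by
    refine hA0 (le_zero_iff.1 ?_)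
    simpa [image_image, h] using e.symm.lipschitz.hausdorffMeasure_image_le hs.le (e '' A)
  obtain ⟨K, hKA, hK, μ, hμ, hμK, hμs⟩ :=
    exists_isFrostman_pi hs (hA.image_of_continuous e.continuous) hA0'
  refine ⟨e.symm '' K, ?_, hK.image e.symm.continuous, μ.map e.symm,
    Measure.isProbabilityMeasure_map hmeas.aemeasurable, ?_,
    hμs.map_antilipschitzWith hs.le hmeas e.symm.antilipschitz⟩
  · simpa [image_image] using image_mono (f := e.symm) hKA
  · rw [Measure.map_apply hmeas (hK.image e.symm.continuous).measurableSet.compl, preimage_compl,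
      preimage_image_eq _ e.symm.injective, hμK]

lemma exists_isFrostman_of_lt_dimH {s : ℝ≥0} (hs : 0 < s) {A : Set E} (hA : AnalyticSet A)
    (hsA : s < dimH A) :
    ∃ K ⊆ A, IsCompact K ∧ ∃ μ : Measure E,
      IsProbabilityMeasure μ ∧ μ Kᶜ = 0 ∧ IsFrostman s μ :=
  exists_isFrostman_of_hausdorffMeasure_ne_zero (NNReal.coe_pos.2 hs) hA (by
    rw [hausdorffMeasure_of_lt_dimH hsA]
    exact ENNReal.top_ne_zero)

end FrostmanLemma

section FourierDensity

open FourierTransform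
open scoped ContDiff ComplexConjugate

variable {V : Type*} [NormedAddCommGroup V] [InnerProductSpace ℝ V] [FiniteDimensional ℝ V]
  [MeasurableSpace V] [BorelSpace V]

/-- The density of a finite measure with integrable characteristic function, as given by Fourier
inversion. The factor `2π` reconciles the normalizations of `charFun` and `𝓕`. -/
noncomputable def fourierDensity (α : Measure V) : V → ℂ :=
  𝓕 fun ξ => charFun α ((2 * Real.pi) • ξ)

lemma continuous_fourier_of_integrable {k : V → ℂ} (hk : Integrable k) : Continuous (𝓕 k) :=
  VectorFourier.fourierIntegral_continuous Real.continuous_fourierChar continuous_inner hk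

lemma integral_fourier_smul_eq_of_integrable {k l : V → ℂ} (hk : Integrable k)
    (hl : Integrable l) : ∫ ξ, 𝓕 k ξ • l ξ = ∫ x, k x • 𝓕 l x := by
  have h := VectorFourier.integral_fourierIntegral_smul_eq_flip (μ := volume) (ν := volume)
    (L := innerₗ V) Real.continuous_fourierChar continuous_inner hk hl
  rwa [flip_innerₗ] at h

variable {α β : Measure V}

lemma integrable_charFun_two_pi_smul (hα : Integrable (charFun α)) :
    Integrable fun ξ => charFun α ((2 * Real.pi) • ξ) :=
  hα.comp_smul Real.two_pi_pos.ne'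

lemma continuous_fourierDensity (hα : Integrable (charFun α)) : Continuous (fourierDensity α) :=
  continuous_fourier_of_integrable (integrable_charFun_two_pi_smul hα)

variable [IsFiniteMeasure β]

lemma integral_fourier_eq_integral_smul_charFun {k : V → ℂ} (hk : Integrable k) :
    ∫ x, 𝓕 k x ∂β = ∫ ξ, k ξ • charFun β (-((2 * Real.pi) • ξ)) := by
  have h := VectorFourier.integral_fourierIntegral_smul_eq_flip (μ := volume) (ν := β)
    (L := innerₗ V) (g := (1 : V → ℂ)) Real.continuous_fourierChar continuous_inner hk
    (integrable_const 1)
  have hchar : ∀ ξ, charFun β (-((2 * Real.pi) • ξ)) =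
      VectorFourier.fourierIntegral Real.fourierChar β (innerₗ V).flip 1 ξ := fun ξ => by
    rw [charFun_eq_fourierIntegral', flip_innerₗ, smul_neg, neg_smul, neg_neg,
      inv_smul_smul₀ Real.two_pi_pos.ne']
  simp_rw [hchar, ← h, Pi.one_apply, smul_eq_mul, mul_one]
  rfl

lemma integral_fourierDensity (hα : Integrable (charFun α)) :
    ∫ x, fourierDensity α x ∂β =
      |((2 * Real.pi) ^ Module.finrank ℝ V)⁻¹| • ∫ ξ, charFun α ξ * conj (charFun β ξ) := by
  rw [fourierDensity,
    integral_fourier_eq_integral_smul_charFun (integrable_charFun_two_pi_smul hα),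
    ← Measure.integral_comp_smul]
  simp only [charFun_neg, smul_eq_mul]

variable [IsFiniteMeasure α]

lemma integral_ofReal_eq_integral_smul_fourierDensity (hα : Integrable (charFun α))
    {g : V → ℝ} (hg : ContDiff ℝ ∞ g) (hgc : HasCompactSupport g) :
    ∫ x, (g x : ℂ) ∂α = ∫ x, g x • fourierDensity α x := by
  let S : SchwartzMap V ℂ := (hgc.comp_left Complex.ofReal_zero).toSchwartzMap
    (Complex.ofRealCLM.contDiff.comp hg)
  let T : SchwartzMap V ℂ := 𝓕⁻ S
  have hT : 𝓕 (⇑T) = S := by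
    rw [← SchwartzMap.fourier_coe, FourierTransform.fourier_fourierInv_eq]
  calc ∫ x, S x ∂α = ∫ x, 𝓕 (⇑T) x ∂α := by rw [hT]
    _ = ∫ ξ, T ξ • charFun α (-((2 * Real.pi) • ξ)) :=
        integral_fourier_eq_integral_smul_charFun T.integrable
    _ = ∫ ξ, T (-ξ) • charFun α ((2 * Real.pi) • ξ) := by
        rw [← integral_neg_eq_self]
        simp only [smul_neg, neg_neg]
    _ = ∫ ξ, 𝓕 (⇑S) ξ • charFun α ((2 * Real.pi) • ξ) := by
        simp only [T, SchwartzMap.fourierInv_coe, Real.fourierInv_eq_fourier_neg, neg_neg]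
    _ = ∫ x, S x • fourierDensity α x :=
        integral_fourier_smul_eq_of_integrable S.integrable (integrable_charFun_two_pi_smul hα)
    _ = ∫ x, g x • fourierDensity α x := by
        refine integral_congr_ae (Eventually.of_forall fun x => ?_)
        exact Complex.coe_smul (g x) _

lemma eqOn_fourierDensity_zero_of_measure_eq_zero (hα : Integrable (charFun α))
    {U : Set V} (hU : IsOpen U) (hαU : α U = 0) : EqOn (fourierDensity α) 0 U := by
  have hcont := continuous_fourierDensity hα
  refine Measure.eqOn_open_of_ae_eq (μ := volume) ?_ hU hcont.continuousOn continuousOn_const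
  refine (ae_restrict_iff' hU.measurableSet).2 (hU.ae_eq_zero_of_integral_contDiff_smul_eq_zero
    (hcont.locallyIntegrable.locallyIntegrableOn U) fun g hg hgc hgU => ?_)
  rw [← integral_ofReal_eq_integral_smul_fourierDensity hα hg hgc]
  refine integral_eq_zero_of_ae ?_
  filter_upwards [measure_eq_zero_iff_ae_notMem.1 hαU] with x hx
  simp [image_eq_zero_of_notMem_tsupport fun hxg => hx (hgU hxg)]

lemma measure_eq_zero_of_eqOn_fourierDensity_zero (hα : Integrable (charFun α))
    {U : Set V} (hU : IsOpen U) (hαU : EqOn (fourierDensity α) 0 U) : α U = 0 := by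
  refine measure_null_of_locally_null U fun x hx => ?_
  obtain ⟨g, hgU, hgc, hg, hg01, hgx⟩ :=
    exists_contDiff_tsupport_subset (n := ⊤) (hU.mem_nhds hx)
  refine ⟨{y | 0 < g y}, mem_nhdsWithin_of_mem_nhds
    ((isOpen_lt continuous_const hg.continuous).mem_nhds (by simp [hgx])), ?_⟩
  have hdensity : ∀ y, g y • fourierDensity α y = 0 := fun y => by
    by_cases hy : y ∈ U
    · simp [hαU hy]
    · simp [image_eq_zero_of_notMem_tsupport fun hyg => hy (hgU hyg)]
  have hint := integral_ofReal_eq_integral_smul_fourierDensity hα hg hgc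
  simp_rw [hdensity, integral_zero] at hint
  rw [integral_complex_ofReal, Complex.ofReal_eq_zero, integral_eq_zero_iff_of_nonneg
    (fun y => (hg01 ⟨y, rfl⟩).1) (hg.continuous.integrable_of_hasCompactSupport hgc)] at hint
  refine measure_eq_zero_iff_ae_notMem.2 ?_
  filter_upwards [hint] with y hy hpos using hpos.ne' hy

lemma support_fourierDensity_subset (hα : Integrable (charFun α)) {F : Set V} (hF : IsClosed F)
    (hαF : α Fᶜ = 0) : Function.support (fourierDensity α) ⊆ F := fun _ hx =>
  by_contra fun hxF =>
    hx (eqOn_fourierDensity_zero_of_measure_eq_zero hα hF.isOpen_compl hαF hxF)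

lemma interior_inter_nonempty_of_integral_charFun_mul_conj_ne_zero
    (hα : Integrable (charFun α)) (hβ : Integrable (charFun β))
    {F G : Set V} (hF : IsClosed F) (hG : IsClosed G) (hαF : α Fᶜ = 0) (hβG : β Gᶜ = 0)
    (hne : ∫ ξ, charFun α ξ * conj (charFun β ξ) ≠ 0) : (interior (F ∩ G)).Nonempty := by
  have hfo := (continuous_fourierDensity hα).isOpen_support
  have hgo := (continuous_fourierDensity hβ).isOpen_support
  refine Nonempty.mono (interior_maximal (inter_subset_inter
    (support_fourierDensity_subset hα hF hαF) (support_fourierDensity_subset hβ hG hβG))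
    (hfo.inter hgo)) ?_
  by_contra hempty
  have hβ0 : β (Function.support (fourierDensity α)) = 0 :=
    measure_eq_zero_of_eqOn_fourierDensity_zero hβ hfo fun x hx =>
      by_contra fun hx' => hempty ⟨x, hx, hx'⟩
  have hint : ∫ x, fourierDensity α x ∂β = 0 :=
    integral_eq_zero_of_ae (ae_iff.2 hβ0)
  rw [integral_fourierDensity hα] at hint
  exact hne ((smul_eq_zero_iff_right (by positivity)).1 hint)

end FourierDensity

section GaussianMean

variable {X : Type*} [MeasurableSpace X]

lemma lintegral_Ioi_ofReal_exp_neg (c : ℝ) :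
    ∫⁻ t in Ioi c, ENNReal.ofReal (Real.exp (-t)) = ENNReal.ofReal (Real.exp (-c)) := by
  rw [← integral_exp_neg_Ioi c, ofReal_integral_eq_lintegral_ofReal (integrableOn_exp_neg_Ioi c)
    (Eventually.of_forall fun t => (Real.exp_pos _).le)]

lemma lintegral_ofReal_exp_neg_eq_lintegral_meas_lt (ρ : Measure X) [SFinite ρ] {a : X → ℝ}
    (ha : Measurable a) :
    ∫⁻ x, ENNReal.ofReal (Real.exp (-a x)) ∂ρ =
      ∫⁻ t, ENNReal.ofReal (Real.exp (-t)) * ρ {x | a x < t} := by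
  let f : X × ℝ → ℝ≥0∞ :=
    {p | a p.1 < p.2}.indicator fun p => ENNReal.ofReal (Real.exp (-p.2))
  have hf : Measurable f :=
    Measurable.indicator (by fun_prop) (measurableSet_lt (by fun_prop) measurable_snd)
  calc ∫⁻ x, ENNReal.ofReal (Real.exp (-a x)) ∂ρ
      = ∫⁻ x, (∫⁻ t, f (x, t)) ∂ρ := by
        refine lintegral_congr fun x => ?_
        rw [← lintegral_Ioi_ofReal_exp_neg, ← lintegral_indicator measurableSet_Ioi]
        rfl
    _ = ∫⁻ t, ∫⁻ x, f (x, t) ∂ρ := lintegral_lintegral_swap hf.aemeasurable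
    _ = ∫⁻ t, ENNReal.ofReal (Real.exp (-t)) * ρ {x | a x < t} := by
        refine lintegral_congr fun t => ?_
        rw [← lintegral_indicator_const (measurableSet_lt ha measurable_const)]
        rfl

lemma lintegral_ofReal_exp_neg_mul_rpow_sqrt_lt_top {s : ℝ} (hs : 0 < s) :
    ∫⁻ t, ENNReal.ofReal (Real.exp (-t)) * ENNReal.ofReal (√(2 * t)) ^ s < ∞ := by
  have hint := ((Real.GammaIntegral_convergent (by positivity : 0 < s / 2 + 1)).const_mul
    ((2 : ℝ) ^ (s / 2))).lintegral_lt_top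
  refine lt_of_eq_of_lt ?_ hint
  rw [← lintegral_indicator measurableSet_Ioi]
  refine lintegral_congr fun t => ?_
  by_cases ht : t ∈ Ioi 0
  · rw [indicator_of_mem ht, ENNReal.ofReal_rpow_of_nonneg (by positivity) hs.le,
      ← ENNReal.ofReal_mul (by positivity), Real.sqrt_eq_rpow,
      ← Real.rpow_mul (mul_nonneg zero_le_two (le_of_lt ht)),
      Real.mul_rpow zero_le_two (le_of_lt ht)]
    ring_nf
  · rw [indicator_of_notMem ht, Real.sqrt_eq_zero_of_nonpos (by rw [mem_Ioi] at ht; linarith)]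
    simp [hs]

variable {E : Type*} [NormedAddCommGroup E] [MeasurableSpace E] {ρ : Measure E} {s : ℝ}

/-- The mean of the Gaussian profile `z ↦ exp (-(r * ‖z‖) ^ 2 / 2)`, of width `1 / r`, under `ρ`. -/
noncomputable def gaussianMean (ρ : Measure E) (r : ℝ) : ℝ :=
  ∫ z, Real.exp (-((r * ‖z‖) ^ 2 / 2)) ∂ρ

variable [OpensMeasurableSpace E]

lemma integrable_exp_neg_mul_norm_sq (ρ : Measure E) [IsFiniteMeasure ρ] (r : ℝ) :
    Integrable (fun z : E => Real.exp (-((r * ‖z‖) ^ 2 / 2))) ρ :=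
  Integrable.of_bound (C := 1) (by fun_prop) (Eventually.of_forall fun z => by
    rw [Real.norm_of_nonneg (Real.exp_pos _).le, Real.exp_le_one_iff, Left.neg_nonpos_iff]
    positivity)

lemma ofReal_gaussianMean (ρ : Measure E) [IsFiniteMeasure ρ] (r : ℝ) :
    ENNReal.ofReal (gaussianMean ρ r) =
      ∫⁻ z, ENNReal.ofReal (Real.exp (-((r * ‖z‖) ^ 2 / 2))) ∂ρ :=
  ofReal_integral_eq_lintegral_ofReal (integrable_exp_neg_mul_norm_sq ρ r)
    (Eventually.of_forall fun _ => (Real.exp_pos _).le)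

lemma gaussianMean_pos (ρ : Measure E) [IsProbabilityMeasure ρ] (r : ℝ) : 0 < gaussianMean ρ r :=
  integral_exp_pos (integrable_exp_neg_mul_norm_sq ρ r)

lemma gaussianMean_le_one (ρ : Measure E) [IsProbabilityMeasure ρ] (r : ℝ) :
    gaussianMean ρ r ≤ 1 := by
  refine (integral_mono (integrable_exp_neg_mul_norm_sq ρ r) (integrable_const 1) fun z => ?_).trans
    (by simp)
  rw [Real.exp_le_one_iff, Left.neg_nonpos_iff]
  positivity

lemma IsFrostman.exists_gaussianMean_le_rpow [IsFiniteMeasure ρ] (hs : 0 < s)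
    (hρ : IsFrostman s ρ) : ∃ M : ℝ≥0, ∀ r, r ≠ 0 → gaussianMean ρ r ≤ M * |r| ^ (-s) := by
  obtain ⟨C, hC⟩ := hρ
  lift ∫⁻ t, ENNReal.ofReal (Real.exp (-t)) * ENNReal.ofReal (√(2 * t)) ^ s to ℝ≥0
    using (lintegral_ofReal_exp_neg_mul_rpow_sqrt_lt_top hs).ne with I hI
  refine ⟨C * I, fun r hr => ?_⟩
  have hball : ∀ t, ρ {z | (r * ‖z‖) ^ 2 / 2 < t} ≤
      C * (ENNReal.ofReal (|r| ^ (-s)) * ENNReal.ofReal (√(2 * t)) ^ s) := fun t => by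
    have hsub : {z : E | (r * ‖z‖) ^ 2 / 2 < t} ⊆ ball 0 (|r|⁻¹ * √(2 * t)) := fun z hz => by
      rw [mem_ball_zero_iff, lt_inv_mul_iff₀ (by positivity), Real.lt_sqrt (by positivity),
        mul_pow, sq_abs, ← mul_pow]
      linarith [hz.out]
    refine (measure_mono hsub).trans ((hC _ _).trans_eq ?_)
    rw [ENNReal.ofReal_mul (by positivity), ENNReal.mul_rpow_of_nonneg _ _ hs.le,
      ENNReal.ofReal_rpow_of_nonneg (by positivity) hs.le, Real.inv_rpow (abs_nonneg r),
      Real.rpow_neg (abs_nonneg r)]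
  rw [← ENNReal.ofReal_le_ofReal_iff (by positivity), ofReal_gaussianMean,
    lintegral_ofReal_exp_neg_eq_lintegral_meas_lt ρ (by fun_prop)]
  calc ∫⁻ t, ENNReal.ofReal (Real.exp (-t)) * ρ {z | (r * ‖z‖) ^ 2 / 2 < t}
      ≤ ∫⁻ t, C * ENNReal.ofReal (|r| ^ (-s)) *
          (ENNReal.ofReal (Real.exp (-t)) * ENNReal.ofReal (√(2 * t)) ^ s) :=
        lintegral_mono fun t => (mul_le_mul_right (hball t) _).trans_eq (by ring)
    _ = ENNReal.ofReal ((C * I : ℝ≥0) * |r| ^ (-s)) := by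
        rw [lintegral_const_mul _ (by fun_prop), ← hI, ENNReal.ofReal_mul (by positivity),
          ENNReal.ofReal_coe_nnreal, ENNReal.coe_mul]
        ring

lemma IsFrostman.exists_gaussianMean_le_one_add_rpow [IsProbabilityMeasure ρ] (hs : 0 < s)
    (hρ : IsFrostman s ρ) : ∃ M : ℝ≥0, ∀ r, gaussianMean ρ r ≤ M * (1 + ‖r‖) ^ (-s) := by
  obtain ⟨M, hM⟩ := hρ.exists_gaussianMean_le_rpow hs
  refine ⟨max M 1 * 2 ^ s, fun r => ?_⟩
  have hhalf : (2 : ℝ) ^ s * (1 + ‖r‖) ^ (-s) = ((1 + ‖r‖) / 2) ^ (-s) := by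
    rw [Real.div_rpow (by positivity) zero_le_two, Real.rpow_neg zero_le_two, div_inv_eq_mul,
      mul_comm]
  push_cast
  rw [mul_assoc, hhalf]
  rcases le_total ‖r‖ 1 with hr | hr
  · calc gaussianMean ρ r ≤ 1 * 1 := by simpa using gaussianMean_le_one ρ r
      _ ≤ max (M : ℝ) 1 * ((1 + ‖r‖) / 2) ^ (-s) := by
        gcongr
        · exact le_max_right _ _
        · exact Real.one_le_rpow_of_pos_of_le_one_of_nonpos (by positivity) (by linarith)
            (by linarith)
  · calc gaussianMean ρ r ≤ M * ‖r‖ ^ (-s) := hM r (norm_pos_iff.1 (by linarith))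
      _ ≤ max (M : ℝ) 1 * ((1 + ‖r‖) / 2) ^ (-s) := by
        gcongr ?_ * ?_
        · exact le_max_left _ _
        · exact Real.rpow_le_rpow_of_nonpos (by positivity) (by linarith) (by linarith)

end GaussianMean

section StdGaussian

open ProbabilityTheory

lemma absolutelyContinuous_pi_fin : ∀ {n : ℕ} {X : Fin n → Type*} [∀ i, MeasurableSpace (X i)]
    {μ ν : ∀ i, Measure (X i)} [∀ i, SigmaFinite (μ i)] [∀ i, SigmaFinite (ν i)],
    (∀ i, μ i ≪ ν i) → Measure.pi μ ≪ Measure.pi ν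
  | 0, _, _, μ, ν, _, _, _ => by rw [Measure.pi_of_empty μ, Measure.pi_of_empty ν]
  | n + 1, _, _, μ, ν, _, _, h => by
    have hmap := ((h 0).prod (absolutelyContinuous_pi_fin fun j => h (Fin.succAbove 0 j))).map
      (MeasurableEquiv.piFinSuccAbove _ 0).symm.measurable
    rwa [(measurePreserving_piFinSuccAbove μ 0).symm.map_eq,
      (measurePreserving_piFinSuccAbove ν 0).symm.map_eq] at hmap

variable {E : Type*} [NormedAddCommGroup E] [InnerProductSpace ℝ E] [FiniteDimensional ℝ E]
  [MeasurableSpace E] [BorelSpace E]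

lemma stdGaussian_absolutelyContinuous_volume : stdGaussian E ≪ volume := by
  have hmp := (stdOrthonormalBasis ℝ E).measurePreserving_repr_symm.comp
    (PiLp.volume_preserving_toLp _)
  have heq : (fun x : Fin (Module.finrank ℝ E) → ℝ => ∑ i, x i • stdOrthonormalBasis ℝ E i) =
      (stdOrthonormalBasis ℝ E).repr.symm ∘ WithLp.toLp 2 :=
    funext fun x => OrthonormalBasis.sum_repr_symm _ (WithLp.toLp 2 x)
  rw [stdGaussian, heq, ← hmp.map_eq]
  exact (absolutelyContinuous_pi_fin fun _ =>
    gaussianReal_absolutelyContinuous 0 one_ne_zero).map hmp.measurable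

end StdGaussian

section DifferenceLaw

variable {E : Type*} [NormedAddCommGroup E] [MeasurableSpace E] [BorelSpace E]
  {μ : Measure E} {s : ℝ}

/-- The law of the difference of independent random vectors with laws `μ` and `ν`. -/
noncomputable def differenceLaw (μ ν : Measure E) : Measure E := μ ∗ ν.map Neg.neg

variable [SecondCountableTopology E] (ν : Measure E) [IsProbabilityMeasure ν]

instance isProbabilityMeasure_differenceLaw [IsProbabilityMeasure μ] :
    IsProbabilityMeasure (differenceLaw μ ν) :=
  have : IsProbabilityMeasure (ν.map Neg.neg) :=
    Measure.isProbabilityMeasure_map measurable_neg.aemeasurable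
  inferInstanceAs (IsProbabilityMeasure (μ ∗ ν.map Neg.neg))

lemma IsFrostman.differenceLaw [SFinite μ] (hμ : IsFrostman s μ) :
    IsFrostman s (differenceLaw μ ν) :=
  have : IsProbabilityMeasure (ν.map Neg.neg) :=
    Measure.isProbabilityMeasure_map measurable_neg.aemeasurable
  hμ.conv _

end DifferenceLaw

section GaussianAverage

open ProbabilityTheory
open scoped ComplexConjugate

variable {E : Type*} [NormedAddCommGroup E] [InnerProductSpace ℝ E] [MeasurableSpace E]
  [BorelSpace E]

lemma charFun_map_inner_right (μ : Measure E) (w : E) (r : ℝ) :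
    charFun (μ.map fun x => ⟪x, w⟫) r = charFun μ (r • w) := by
  rw [charFun_apply, integral_map (by fun_prop) (by fun_prop), charFun_apply]
  simp only [inner_smul_right, RCLike.inner_apply, conj_trivial]

variable [SecondCountableTopology E] (μ ν : Measure E)

lemma integral_charFun_comm [IsFiniteMeasure μ] [IsFiniteMeasure ν] :
    ∫ w, charFun μ w ∂ν = ∫ z, charFun ν z ∂μ := by
  simp_rw [charFun_apply]
  rw [integral_integral_swap]
  · simp_rw [real_inner_comm]
  · refine Integrable.of_bound (C := 1) ?_ (Eventually.of_forall fun p => ?_)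
    · exact (by fun_prop : Continuous fun p : E × E =>
        Complex.exp (⟪p.2, p.1⟫ * Complex.I)).aestronglyMeasurable
    · exact (Complex.norm_exp_ofReal_mul_I _).le

lemma charFun_differenceLaw [IsFiniteMeasure μ] [IsFiniteMeasure ν] (ξ : E) :
    charFun (differenceLaw μ ν) ξ = charFun μ ξ * conj (charFun ν ξ) := by
  have hneg : (Neg.neg : E → E) = fun x => (-1 : ℝ) • x := by
    ext x
    rw [neg_one_smul]
  rw [differenceLaw, charFun_conv, hneg, charFun_map_smul, neg_one_smul, charFun_neg]

end GaussianAverage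

section GaussianDirections

open ProbabilityTheory
open scoped ComplexConjugate

variable {E : Type*} [NormedAddCommGroup E] [InnerProductSpace ℝ E] [FiniteDimensional ℝ E]
  [MeasurableSpace E] [BorelSpace E] {μ ν : Measure E} {s : ℝ}

lemma integral_charFun_smul_stdGaussian (ρ : Measure E) [IsFiniteMeasure ρ] (r : ℝ) :
    ∫ w, charFun ρ (r • w) ∂stdGaussian E = gaussianMean ρ r := by
  simp_rw [← charFun_map_smul r]
  rw [integral_charFun_comm, integral_map (by fun_prop) measurable_charFun.aestronglyMeasurable,
    gaussianMean, ← integral_complex_ofReal]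
  refine integral_congr_ae (Eventually.of_forall fun z => ?_)
  simp only [charFun_stdGaussian, norm_smul, ← Complex.ofReal_pow, mul_pow, Real.norm_eq_abs,
    sq_abs]
  push_cast
  ring_nf

lemma integral_charFun_mul_conj_stdGaussian (μ ν : Measure E) [IsProbabilityMeasure μ]
    [IsProbabilityMeasure ν] (r : ℝ) :
    ∫ w, charFun μ (r • w) * conj (charFun ν (r • w)) ∂stdGaussian E =
      gaussianMean (differenceLaw μ ν) r := by
  simp_rw [← charFun_differenceLaw, integral_charFun_smul_stdGaussian]

lemma memLp_charFun_smul (μ : Measure E) [IsProbabilityMeasure μ] (r : ℝ) (γ : Measure E)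
    [IsFiniteMeasure γ] (p : ℝ≥0∞) : MemLp (fun w => charFun μ (r • w)) p γ :=
  MemLp.of_bound (measurable_charFun.comp (measurable_const_smul r)).aestronglyMeasurable 1
    (Eventually.of_forall fun _ => norm_charFun_le_one _)

lemma integral_norm_charFun_smul_stdGaussian_le (μ : Measure E) [IsProbabilityMeasure μ] (r : ℝ) :
    ∫ w, ‖charFun μ (r • w)‖ ∂stdGaussian E ≤ √(gaussianMean (differenceLaw μ μ) r) := by
  have hsq : ∫ w, ‖charFun μ (r • w)‖ ^ 2 ∂stdGaussian E = gaussianMean (differenceLaw μ μ) r := by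
    rw [← Complex.ofReal_inj, ← integral_charFun_mul_conj_stdGaussian, ← integral_complex_ofReal]
    simp only [Complex.mul_conj, Complex.normSq_eq_norm_sq]
  refine Real.le_sqrt_of_sq_le ?_
  rw [← hsq, ← sub_nonneg]
  have hvar := variance_eq_sub (memLp_charFun_smul μ r (stdGaussian E) 2).norm
  exact (variance_nonneg _ _).trans_eq hvar

/-- By Cauchy-Schwarz the average of `‖charFun μ (r • w)‖` over Gaussian `w` is `O(|r| ^ (-s / 2))`;
this is where exponents greater than two come in. -/
lemma IsFrostman.integrable_charFun_smul [IsProbabilityMeasure μ] (hs : 2 < s)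
    (hμ : IsFrostman s μ) :
    Integrable (fun p : ℝ × E => charFun μ (p.1 • p.2)) (volume.prod (stdGaussian E)) := by
  have hmeas : Measurable fun p : ℝ × E => charFun μ (p.1 • p.2) :=
    measurable_charFun.comp measurable_smul
  obtain ⟨M, hM⟩ := (hμ.differenceLaw μ).exists_gaussianMean_le_one_add_rpow (by linarith)
  refine (integrable_prod_iff hmeas.aestronglyMeasurable).2
    ⟨Eventually.of_forall fun r => (memLp_charFun_smul μ r _ 1).integrable le_rfl, ?_⟩
  have hdecay : Integrable fun r : ℝ => √M * (1 + ‖r‖) ^ (-(s / 2)) :=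
    (integrable_one_add_norm (by simp; linarith)).const_mul _
  refine hdecay.mono' hmeas.norm.stronglyMeasurable.integral_prod_right'.aestronglyMeasurable
    (Eventually.of_forall fun r => ?_)
  calc ‖∫ w, ‖charFun μ (r • w)‖ ∂stdGaussian E‖
      = ∫ w, ‖charFun μ (r • w)‖ ∂stdGaussian E :=
        Real.norm_of_nonneg (integral_nonneg fun _ => norm_nonneg _)
    _ ≤ √(gaussianMean (_root_.differenceLaw μ μ) r) :=
        integral_norm_charFun_smul_stdGaussian_le μ r
    _ ≤ √(M * (1 + ‖r‖) ^ (-s)) := Real.sqrt_le_sqrt (hM r)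
    _ = √M * (1 + ‖r‖) ^ (-(s / 2)) := by
        rw [Real.sqrt_mul M.coe_nonneg, Real.sqrt_eq_rpow ((1 + ‖r‖) ^ (-s)),
          ← Real.rpow_mul (by positivity)]
        ring_nf

lemma integrable_charFun_smul_mul_conj [IsProbabilityMeasure ν]
    {γ : Measure E} [SFinite γ]
    (hμ : Integrable (fun p : ℝ × E => charFun μ (p.1 • p.2)) (volume.prod γ)) :
    Integrable (fun p : ℝ × E => charFun μ (p.1 • p.2) * conj (charFun ν (p.1 • p.2)))
      (volume.prod γ) := by
  have hmeas : Measurable fun p : ℝ × E => conj (charFun ν (p.1 • p.2)) :=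
    Complex.continuous_conj.measurable.comp (measurable_charFun.comp measurable_smul)
  refine hμ.mul_bdd (c := 1) hmeas.aestronglyMeasurable (Eventually.of_forall fun p => ?_)
  rw [RCLike.norm_conj]
  exact norm_charFun_le_one _

lemma integral_integral_charFun_mul_conj_ne_zero [IsProbabilityMeasure μ] [IsProbabilityMeasure ν]
    (hμ : Integrable (fun p : ℝ × E => charFun μ (p.1 • p.2)) (volume.prod (stdGaussian E))) :
    ∫ w, (∫ r : ℝ, charFun μ (r • w) * conj (charFun ν (r • w))) ∂stdGaussian E ≠ 0 := by
  have hint := integrable_charFun_smul_mul_conj (ν := ν) hμ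
  have hmean : Integrable fun r => gaussianMean (differenceLaw μ ν) r := by
    have h := hint.integral_prod_left
    simp_rw [integral_charFun_mul_conj_stdGaussian] at h
    exact h.re
  have hpos : ∀ r, 0 < gaussianMean (differenceLaw μ ν) r := gaussianMean_pos _
  rw [← integral_integral_swap hint]
  simp_rw [integral_charFun_mul_conj_stdGaussian]
  rw [integral_complex_ofReal, Complex.ofReal_ne_zero]
  have hsupp : Function.support (gaussianMean (differenceLaw μ ν)) = univ :=
    Function.support_eq_univ fun r => (hpos r).ne'
  refine ((integral_pos_iff_support_of_nonneg (fun r => (hpos r).le) hmean).2 ?_).ne'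
  rw [hsupp]
  exact Measure.measure_univ_pos.2 (NeZero.ne _)

end GaussianDirections

section OverlapDirections

open ProbabilityTheory
open scoped ComplexConjugate

variable {E : Type*} [NormedAddCommGroup E] [InnerProductSpace ℝ E]

/-- The vectors `w`, of any length, for which the images of `A` and `B` under `⟪·, w⟫` overlap in a
set with non-empty interior. -/
def overlapDirections (A B : Set E) : Set E :=
  {w | (interior ((fun x => ⟪x, w⟫) '' A ∩ (fun x => ⟪x, w⟫) '' B)).Nonempty}

lemma overlapDirections_mono {A A' B B' : Set E} (hA : A ⊆ A') (hB : B ⊆ B') :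
    overlapDirections A B ⊆ overlapDirections A' B' := fun _ hw =>
  hw.mono (interior_mono (inter_subset_inter (image_mono hA) (image_mono hB)))

lemma smul_mem_overlapDirections {A B : Set E} {c : ℝ} (hc : c ≠ 0) {w : E}
    (hw : w ∈ overlapDirections A B) : c • w ∈ overlapDirections A B := by
  have himage (S : Set E) :
      (fun x => ⟪x, c • w⟫) '' S = (c • ·) '' ((fun x => ⟪x, w⟫) '' S) := by
    simp only [image_image, inner_smul_right, smul_eq_mul]
  simp only [overlapDirections, mem_ofPred_eq, himage]
  rw [← image_inter (smul_right_injective ℝ hc)]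
  exact (hw.image _).mono ((isOpenMap_smul₀ hc).image_interior_subset _)

lemma map_compl_image_eq_zero {X Y : Type*} [MeasurableSpace X] [MeasurableSpace Y]
    {μ : Measure X} {K : Set X} {f : X → Y} (hf : Measurable f) (hfK : MeasurableSet (f '' K))
    (hK : μ Kᶜ = 0) : μ.map f (f '' K)ᶜ = 0 := by
  rw [Measure.map_apply hf hfK.compl, preimage_compl]
  exact measure_mono_null (compl_subset_compl.2 (subset_preimage_image f K)) hK

variable [MeasurableSpace E] [BorelSpace E] {K L : Set E} {μ ν : Measure E}

lemma mem_overlapDirections_of_integral_charFun_mul_conj_ne_zero [IsFiniteMeasure μ]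
    [IsFiniteMeasure ν] (hK : IsCompact K) (hL : IsCompact L) (hμK : μ Kᶜ = 0) (hνL : ν Lᶜ = 0)
    {w : E} (hμ : Integrable fun r : ℝ => charFun μ (r • w))
    (hν : Integrable fun r : ℝ => charFun ν (r • w))
    (hne : ∫ r : ℝ, charFun μ (r • w) * conj (charFun ν (r • w)) ≠ 0) :
    w ∈ overlapDirections K L := by
  simp_rw [← charFun_map_inner_right] at hμ hν hne
  have hmeas : Measurable fun x => ⟪x, w⟫ := by fun_prop
  have hclosed {M : Set E} (hM : IsCompact M) : IsClosed ((fun x => ⟪x, w⟫) '' M) :=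
    (hM.image (by fun_prop)).isClosed
  exact interior_inter_nonempty_of_integral_charFun_mul_conj_ne_zero hμ hν (hclosed hK) (hclosed hL)
    (map_compl_image_eq_zero hmeas (hclosed hK).measurableSet hμK)
    (map_compl_image_eq_zero hmeas (hclosed hL).measurableSet hνL) hne

variable [FiniteDimensional ℝ E] [IsProbabilityMeasure μ] [IsProbabilityMeasure ν]

lemma volume_overlapDirections_ne_zero_of_isFrostman (hK : IsCompact K) (hL : IsCompact L)
    (hμK : μ Kᶜ = 0) (hνL : ν Lᶜ = 0) {s t : ℝ} (hs : 2 < s) (ht : 2 < t) (hμ : IsFrostman s μ)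
    (hν : IsFrostman t ν) : volume (overlapDirections K L) ≠ 0 := by
  intro h0
  have hμ := hμ.integrable_charFun_smul hs
  have hν := hν.integrable_charFun_smul ht
  refine integral_integral_charFun_mul_conj_ne_zero (ν := ν) hμ (integral_eq_zero_of_ae ?_)
  filter_upwards [measure_eq_zero_iff_ae_notMem.1 (stdGaussian_absolutelyContinuous_volume h0),
    hμ.prod_left_ae, hν.prod_left_ae] with w hw hμw hνw
  by_contra hne
  exact hw (mem_overlapDirections_of_integral_charFun_mul_conj_ne_zero hK hL hμK hνL hμw hνw hne)

theorem volume_overlapDirections_ne_zero {A B : Set E} (hA : AnalyticSet A) (hB : AnalyticSet B)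
    (hdA : 2 < dimH A) (hdB : 2 < dimH B) : volume (overlapDirections A B) ≠ 0 := by
  obtain ⟨s, hs, hsA⟩ := ENNReal.lt_iff_exists_nnreal_btwn.1 hdA
  obtain ⟨t, ht, htB⟩ := ENNReal.lt_iff_exists_nnreal_btwn.1 hdB
  have hs : 2 < s := by exact_mod_cast hs
  have ht : 2 < t := by exact_mod_cast ht
  obtain ⟨K, hKA, hK, μ, _, hμK, hμ⟩ := exists_isFrostman_of_lt_dimH (two_pos.trans hs) hA hsA
  obtain ⟨L, hLB, hL, ν, _, hνL, hν⟩ := exists_isFrostman_of_lt_dimH (two_pos.trans ht) hB htB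
  exact mt (measure_mono_null (overlapDirections_mono hKA hLB)) <|
    volume_overlapDirections_ne_zero_of_isFrostman hK hL hμK hνL (by exact_mod_cast hs)
      (by exact_mod_cast ht) hμ hν

end OverlapDirections

section Cone

open Module

lemma addHaar_preimage_linearMap_eq_zero {E F : Type*} [NormedAddCommGroup E] [NormedSpace ℝ E]
    [MeasurableSpace E] [BorelSpace E] [LocallyCompactSpace E] [NormedAddCommGroup F]
    [NormedSpace ℝ F] [MeasurableSpace F] [BorelSpace F] (μ : Measure E) [μ.IsAddHaarMeasure]
    (ν : Measure F) [ν.IsAddHaarMeasure] {L : E →ₗ[ℝ] F} (hL : Function.Surjective L) {s : Set F}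
    (hs : ν s = 0) : μ (L ⁻¹' s) = 0 := by
  have hν : ∀ᵐ y ∂ν, y ∈ (toMeasurable ν s)ᶜ :=
    measure_eq_zero_iff_ae_notMem.1 ((measure_toMeasurable s).trans hs)
  have hμ := (ae_comp_linearMap_mem_iff L μ ν hL (measurableSet_toMeasurable ν s).compl).2 hν
  exact measure_mono_null (preimage_mono (subset_toMeasurable ν s))
    (measure_eq_zero_iff_ae_notMem.2 hμ)

variable {E : Type*} [NormedAddCommGroup E] [InnerProductSpace ℝ E]

/-- The chart by which orthogonal projection along `v` parametrises cones: it sends `x` to the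
multiple by `⟪v, x⟫` of the point of the open unit hemisphere with pole `v` lying above the
projection of `x` to the hyperplane `vᗮ`. -/
noncomputable def hemisphereConeChart (v x : E) : E :=
  ⟪v, x⟫ • ((ℝ ∙ v)ᗮ.starProjection x + √(1 - ‖(ℝ ∙ v)ᗮ.starProjection x‖ ^ 2) • v)

lemma differentiableOn_hemisphereConeChart (v : E) :
    DifferentiableOn ℝ (hemisphereConeChart v) {x | ‖(ℝ ∙ v)ᗮ.starProjection x‖ < 1} := by
  have hproj : Differentiable ℝ fun x => (ℝ ∙ v)ᗮ.starProjection x :=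
    (ℝ ∙ v)ᗮ.starProjection.differentiable
  have hinner : Differentiable ℝ fun x : E => ⟪v, x⟫ := (innerSL ℝ v).differentiable
  intro x (hx : ‖_‖ < 1)
  have hsqrt : DifferentiableAt ℝ (fun x => √(1 - ‖(ℝ ∙ v)ᗮ.starProjection x‖ ^ 2)) x :=
    (((hproj x).norm_sq ℝ).const_sub 1).sqrt
      (sub_pos.2 (pow_lt_one₀ (norm_nonneg _) hx two_ne_zero)).ne'
  exact ((hinner x).smul ((hproj x).add (hsqrt.smul_const v))).differentiableWithinAt

lemma norm_starProjection_orthogonal_singleton_sq {v : E} (hv : ‖v‖ = 1) (x : E) :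
    ‖(ℝ ∙ v)ᗮ.starProjection x‖ ^ 2 = ‖x‖ ^ 2 - ⟪v, x⟫ ^ 2 := by
  rw [Submodule.norm_sq_eq_add_norm_sq_starProjection x (ℝ ∙ v),
    Submodule.starProjection_unit_singleton ℝ hv, norm_smul, hv, mul_one, Real.norm_eq_abs, sq_abs,
    add_sub_cancel_left]

lemma starProjection_orthogonal_singleton_add_smul (v x : E) (c : ℝ) :
    (ℝ ∙ v)ᗮ.starProjection ((ℝ ∙ v)ᗮ.starProjection x + c • v) = (ℝ ∙ v)ᗮ.starProjection x := by
  rw [map_add, map_smul, Submodule.starProjection_orthogonalComplement_singleton_eq_zero,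
    smul_zero, add_zero]
  exact Submodule.starProjection_eq_self_iff.2 (Submodule.starProjection_apply_mem _ _)

lemma hemisphereConeChart_starProjection_add_smul {v e : E} (hv : ‖v‖ = 1) (he : ‖e‖ = 1)
    (hve : 0 ≤ ⟪v, e⟫) (c : ℝ) :
    hemisphereConeChart v ((ℝ ∙ v)ᗮ.starProjection e + c • v) = c • e := by
  have hinner : ⟪v, (ℝ ∙ v)ᗮ.starProjection e + c • v⟫ = c := by
    rw [inner_add_right, inner_smul_right, real_inner_self_eq_norm_sq, hv,
      Submodule.mem_orthogonal_singleton_iff_inner_right.1 (Submodule.starProjection_apply_mem _ e)]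
    ring
  have hsqrt : √(1 - ‖(ℝ ∙ v)ᗮ.starProjection e‖ ^ 2) = ⟪v, e⟫ := by
    rw [norm_starProjection_orthogonal_singleton_sq hv, he, one_pow, sub_sub_cancel,
      Real.sqrt_sq hve]
  rw [hemisphereConeChart, starProjection_orthogonal_singleton_add_smul, hinner, hsqrt,
    ← Submodule.starProjection_unit_singleton ℝ hv, add_comm,
    Submodule.starProjection_add_starProjection_orthogonal]

lemma exists_eq_smul_of_inner_ne_zero {v w : E} (hw : ⟪v, w⟫ ≠ 0) :
    ∃ (c : ℝ) (e : E), c ≠ 0 ∧ ‖e‖ = 1 ∧ 0 < ⟪v, e⟫ ∧ w = c • e := by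
  have hw0 : 0 < ‖w‖ := norm_pos_iff.2 fun h => hw (by rw [h, inner_zero_right])
  obtain ⟨c, hc, hcw⟩ : ∃ c : ℝ, |c| = ‖w‖ ∧ 0 < c⁻¹ * ⟪v, w⟫ := by
    rcases hw.lt_or_gt with hneg | hpos
    · exact ⟨-‖w‖, by rw [abs_neg, abs_norm],
        mul_pos_of_neg_of_neg (inv_lt_zero.2 (neg_lt_zero.2 hw0)) hneg⟩
    · exact ⟨‖w‖, abs_norm w, mul_pos (inv_pos.2 hw0) hpos⟩
  have hc0 : c ≠ 0 := abs_pos.1 (hc ▸ hw0)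
  refine ⟨c, c⁻¹ • w, hc0, ?_, by rwa [inner_smul_right], (smul_inv_smul₀ hc0 w).symm⟩
  rw [norm_smul, norm_inv, Real.norm_eq_abs, hc, inv_mul_cancel₀ hw0.ne']

variable [FiniteDimensional ℝ E] [MeasurableSpace E] [BorelSpace E]

lemma addHaar_preimage_orthogonalProjectionOnto_image_eq_zero (μ : Measure E) [μ.IsAddHaarMeasure]
    (K : Submodule ℝ E) {S : Set E} (hS : μH[finrank ℝ K] S = 0) :
    μ (K.orthogonalProjectionOnto ⁻¹' (K.orthogonalProjectionOnto '' S)) = 0 := by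
  have himage : μH[finrank ℝ K] (K.orthogonalProjectionOnto '' S) = 0 := by
    have h := K.lipschitzWith_orthogonalProjectionOnto.hausdorffMeasure_image_le
      (Nat.cast_nonneg (finrank ℝ K)) S
    rwa [hS, mul_zero, nonpos_iff_eq_zero] at h
  exact addHaar_preimage_linearMap_eq_zero μ μH[finrank ℝ K]
    (L := (K.orthogonalProjectionOnto : E →ₗ[ℝ] K))
    (fun x => ⟨x, K.orthogonalProjectionOnto_mem_subspace_eq_self x⟩) himage

theorem addHaar_cone_eq_zero [Nontrivial E] (μ : Measure E) [μ.IsAddHaarMeasure] {G : Set E}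
    (hG : ∀ c : ℝ, c ≠ 0 → ∀ w ∈ G, c • w ∈ G)
    (hS : μH[(finrank ℝ E : ℝ) - 1] {e | ‖e‖ = 1 ∧ e ∈ G} = 0) : μ G = 0 := by
  obtain ⟨v, hv⟩ := exists_norm_eq E zero_le_one
  have hv0 : v ≠ 0 := norm_ne_zero_iff.1 (hv ▸ one_ne_zero)
  have hrank : (finrank ℝ (ℝ ∙ v)ᗮ : ℝ) = (finrank ℝ E : ℝ) - 1 := by
    rw [← Submodule.finrank_add_finrank_orthogonal (ℝ ∙ v), finrank_span_singleton hv0]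
    push_cast
    ring
  rw [← hrank] at hS
  have hnull := addHaar_preimage_orthogonalProjectionOnto_image_eq_zero μ _ hS
  have hhyper : μ ((ℝ ∙ v)ᗮ : Submodule ℝ E) = 0 :=
    Measure.addHaar_submodule μ _ (by simpa using hv0)
  refine measure_mono_null (fun w hw => ?_) (measure_union_null hhyper
    (addHaar_image_eq_zero_of_differentiableOn_of_addHaar_eq_zero μ
      ((differentiableOn_hemisphereConeChart v).mono inter_subset_right)
      (measure_inter_null_of_null_left _ hnull)))
  by_cases hvw : ⟪v, w⟫ = 0
  · exact .inl (Submodule.mem_orthogonal_singleton_iff_inner_right.2 hvw)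
  · obtain ⟨c, e, hc, he, hve, rfl⟩ := exists_eq_smul_of_inner_ne_zero hvw
    have heG : e ∈ G := inv_smul_smul₀ hc e ▸ hG c⁻¹ (inv_ne_zero hc) _ hw
    have hproj := starProjection_orthogonal_singleton_add_smul v e c
    have hnorm :
        ‖(ℝ ∙ v)ᗮ.starProjection ((ℝ ∙ v)ᗮ.starProjection e + c • v)‖ < 1 := by
      rw [hproj, ← sq_lt_one_iff₀ (norm_nonneg _), norm_starProjection_orthogonal_singleton_sq hv,
        he, one_pow]
      exact sub_lt_self 1 (sq_pos_of_pos hve)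
    exact .inr ⟨_, ⟨⟨e, ⟨he, heG⟩, Subtype.ext hproj.symm⟩, hnorm⟩,
      hemisphereConeChart_starProjection_add_smul hv he hve.le c⟩

end Cone

theorem stmt_2_general {E : Type*} [NormedAddCommGroup E] [InnerProductSpace ℝ E]
    [FiniteDimensional ℝ E] [MeasurableSpace E] [BorelSpace E] {A B : Set E} (hA : AnalyticSet A)
    (hB : AnalyticSet B) (hdA : 2 < dimH A) (hdB : 2 < dimH B) :
    0 < μH[(Module.finrank ℝ E : ℝ) - 1] {e : E | ‖e‖ = 1 ∧
      (interior ((fun x => ⟪x, e⟫) '' A ∩ (fun x => ⟪x, e⟫) '' B)).Nonempty} := by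
  have : Nontrivial E := by
    by_contra h
    rw [not_nontrivial_iff_subsingleton] at h
    exact not_lt_zero (dimH_subsingleton A.subsingleton_of_subsingleton ▸ hdA)
  exact pos_iff_ne_zero.2 <| mt (addHaar_cone_eq_zero volume fun _ hc _ =>
    smul_mem_overlapDirections hc) (volume_overlapDirections_ne_zero hA hB hdA hdB)

theorem stmt_2 (n : ℕ) (hn : 3 ≤ n)
    (A B : Set (EuclideanSpace ℝ (Fin n)))
    (hA : MeasurableSet A) (hB : MeasurableSet B)
    (hdA : 2 < dimH A) (hdB : 2 < dimH B) :
    0 < μH[(n : ℝ) - 1]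
      {e : EuclideanSpace ℝ (Fin n) | ‖e‖ = 1 ∧
        (interior ((fun x => ⟪x, e⟫) '' A ∩ (fun x => ⟪x, e⟫) '' B)).Nonempty} := by
  simpa using stmt_2_general hA.analyticSet hB.analyticSet hdA hdB
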